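/- arXiv:1012.4257 — 9 statements merged into one kernel-verified Lean document; each statement's English description precedes it below -/
import Mathlib

section
/- Fix positive integers m and d. In the polynomial ring ℤ[a₁,…,a_d], with the conventions a₀ = 1 and a_i = 0 for i < 0 or i > d, define d_r := det((a_{1+j−i})_{1≤i,j≤r}) for r ≥ 1. Then the quotient of ℤ[a₁,…,a_d] by the ideal generated by the elements d_r for m+1 ≤ r ≤ m+d is a free ℤ-module of rank binom(m+d, d). -/
/-- The sequence `a₀ = 1, a₁, …, a_d` (and `0` otherwise) in `ℤ[a₁,…,a_d]`, indexed by
integers, with the convention `a_k = 0` for `k < 0` or `k > d`. -/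
noncomputable def aseq (d : ℕ) (k : ℤ) : MvPolynomial (Fin d) ℤ :=
  if h : 1 ≤ k ∧ k ≤ d then MvPolynomial.X ⟨(k - 1).toNat, by omega⟩
  else if k = 0 then 1 else 0

/-- `d_r := det((a_{1+j−i})_{1≤i,j≤r})` in `ℤ[a₁,…,a_d]`, with `d₀ = 1`. -/
noncomputable def dr (d r : ℕ) : MvPolynomial (Fin d) ℤ :=
  Matrix.det (Matrix.of fun i j : Fin r => aseq d (1 + ((j : ℕ) : ℤ) - ((i : ℕ) : ℤ)))

open Polynomial

/-- Monic of formal degree `k`. -/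
def MonDeg {F : Type} [CommRing F] (f : F[X]) (k : ℕ) : Prop :=
  f.coeff k = 1 ∧ ∀ i, k < i → f.coeff i = 0

lemma MonDeg.monic {F : Type} [CommRing F] {f : F[X]} {k : ℕ} (h : MonDeg f k) : f.Monic :=
  MonicDegreeEq.monic (⟨f, h.1, fun i hi => h.2 i hi⟩ : MonicDegreeEq F k)

lemma MonDeg.natDegree {F : Type} [CommRing F] [Nontrivial F] {f : F[X]} {k : ℕ}
    (h : MonDeg f k) : f.natDegree = k :=
  MonicDegreeEq.natDegree (⟨f, h.1, fun i hi => h.2 i hi⟩ : MonicDegreeEq F k)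

lemma MonDeg.of_monic {F : Type} [CommRing F] {f : F[X]} {k : ℕ}
    (h : f.Monic) (h' : f.natDegree = k) : MonDeg f k :=
  ⟨(MonicDegreeEq.mk f h h').2.1, fun i hi => (MonicDegreeEq.mk f h h').2.2 i hi⟩

lemma MonDeg.map {F G : Type} [CommRing F] [CommRing G] {f : F[X]} {k : ℕ} (h : MonDeg f k)
    (φ : F →+* G) : MonDeg (f.map φ) k :=
  ⟨by simp [h.1], fun i hi => by simp [h.2 i hi]⟩

lemma MonDeg.X_sub_C_mul {F : Type} [CommRing F] {f : F[X]} {k : ℕ} (h : MonDeg f k) (x : F) :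
    MonDeg ((X - C x) * f) (k + 1) := by
  cases subsingleton_or_nontrivial F
  · exact ⟨Subsingleton.elim _ _, fun _ _ => Subsingleton.elim _ _⟩
  · refine MonDeg.of_monic ((monic_X_sub_C x).mul h.monic) ?_
    rw [(monic_X_sub_C x).natDegree_mul h.monic, natDegree_X_sub_C, h.natDegree, add_comm]

lemma MonDeg.div {F : Type} [CommRing F] {f : F[X]} {k : ℕ} (h : MonDeg f (k + 1)) (x : F) :
    MonDeg (f /ₘ (X - C x)) k := by
  cases subsingleton_or_nontrivial F
  · exact ⟨Subsingleton.elim _ _, fun _ _ => Subsingleton.elim _ _⟩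
  · have hd : (X - C x).degree ≤ f.degree := by
      rw [degree_X_sub_C, degree_eq_natDegree h.monic.ne_zero, h.natDegree]
      norm_cast; omega
    refine MonDeg.of_monic ?_ ?_
    · rw [Monic, leadingCoeff_divByMonic_of_monic (monic_X_sub_C x) hd, h.monic]
    · rw [natDegree_divByMonic _ (monic_X_sub_C x), natDegree_X_sub_C, h.natDegree]; rfl

lemma adj_equiv {F : Type} [CommRing F] {f : F[X]} {k : ℕ} (h : MonDeg f k) :
    Nonempty (AdjoinRoot f ≃+ (Fin k → F)) := by
  cases subsingleton_or_nontrivial F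
  · have : Subsingleton (AdjoinRoot f) := Module.subsingleton F _
    exact ⟨{ toFun := 0, invFun := 0, left_inv := fun _ => Subsingleton.elim _ _,
             right_inv := fun _ => Subsingleton.elim _ _,
             map_add' := fun _ _ => Subsingleton.elim _ _ }⟩
  · let b := (AdjoinRoot.powerBasis' h.monic).basis
    have : (AdjoinRoot.powerBasis' h.monic).dim = k := by simp [h.natDegree]
    exact ⟨((b.reindex (finCongr this)).equivFun).toAddEquiv⟩

structure IsUF {R F : Type} [CommRing R] [CommRing F] (i : R →+* F) (p : R[X]) (k : ℕ)
    (f : F[X]) : Prop where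
  mon : MonDeg f k
  dvd : f ∣ p.map i
  lift : ∀ (C : Type) [CommRing C] (φ : R →+* C) (f' : C[X]), MonDeg f' k → f' ∣ p.map φ →
    ∃ ψ : F →+* C, ψ.comp i = φ ∧ f.map ψ = f'
  uniq : ∀ (C : Type) [CommRing C] (ψ ψ' : F →+* C), ψ.comp i = ψ'.comp i →
    f.map ψ = f.map ψ' → ψ = ψ'

lemma X_sub_cancel {F : Type} [CommRing F] {x : F} {a b : F[X]}
    (h : (X - C x) * a = (X - C x) * b) : a = b :=
  (monic_X_sub_C x).isRegular.left h

lemma IsUF.step {R F : Type} [CommRing R] [CommRing F] {i : R →+* F} {p : R[X]} {k : ℕ}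
    {f : F[X]} (h : IsUF i p (k + 1) f) :
    ∃ j : AdjoinRoot p →+* AdjoinRoot f,
      IsUF j ((p.map (AdjoinRoot.of p)) /ₘ (X - C (AdjoinRoot.root p))) k
        ((f.map (AdjoinRoot.of f)) /ₘ (X - C (AdjoinRoot.root f))) := by
  have hp : (X - C (AdjoinRoot.root p)) *
      ((p.map (AdjoinRoot.of p)) /ₘ (X - C (AdjoinRoot.root p))) = p.map (AdjoinRoot.of p) :=
    mul_divByMonic_eq_iff_isRoot.2 (AdjoinRoot.isRoot_root p)
  have hf : (X - C (AdjoinRoot.root f)) *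
      ((f.map (AdjoinRoot.of f)) /ₘ (X - C (AdjoinRoot.root f))) = f.map (AdjoinRoot.of f) :=
    mul_divByMonic_eq_iff_isRoot.2 (AdjoinRoot.isRoot_root f)
  have hq : MonDeg ((f.map (AdjoinRoot.of f)) /ₘ (X - C (AdjoinRoot.root f))) k :=
    (h.mon.map _).div _
  set p' := (p.map (AdjoinRoot.of p)) /ₘ (X - C (AdjoinRoot.root p))
  set q := (f.map (AdjoinRoot.of f)) /ₘ (X - C (AdjoinRoot.root f))
  have hroot : p.eval₂ ((AdjoinRoot.of f).comp i) (AdjoinRoot.root f) = 0 := by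
    obtain ⟨g, hg⟩ := h.dvd
    rw [← eval₂_map, hg, eval₂_mul, AdjoinRoot.eval₂_root, zero_mul]
  let j : AdjoinRoot p →+* AdjoinRoot f :=
    AdjoinRoot.lift ((AdjoinRoot.of f).comp i) (AdjoinRoot.root f) hroot
  have hj1 : j.comp (AdjoinRoot.of p) = (AdjoinRoot.of f).comp i := by
    ext x; simp [j]
  have hj2 : j (AdjoinRoot.root p) = AdjoinRoot.root f := by simp [j]
  refine ⟨j, hq, ?_, ?_, ?_⟩
  · obtain ⟨g, hg⟩ := h.dvd
    refine ⟨g.map (AdjoinRoot.of f), X_sub_cancel (x := AdjoinRoot.root f) ?_⟩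
    rw [← mul_assoc, hf, ← Polynomial.map_mul, ← hg, Polynomial.map_map, ← hj1,
      ← Polynomial.map_map, ← hp]
    simp [hj2]
  · intro C' _ φ q' hq' hdvd
    obtain ⟨ψ0, h1, h2⟩ := h.lift C' (φ.comp (AdjoinRoot.of p))
      ((X - C (φ (AdjoinRoot.root p))) * q') (hq'.X_sub_C_mul _) (by
        rw [← Polynomial.map_map, ← hp]
        simpa using mul_dvd_mul_left _ hdvd)
    have h3 : f.eval₂ ψ0 (φ (AdjoinRoot.root p)) = 0 := by
      rw [← eval_map, h2]; simp
    have h4 : (AdjoinRoot.lift ψ0 (φ (AdjoinRoot.root p)) h3).comp (AdjoinRoot.of f) = ψ0 := by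
      ext x; simp
    refine ⟨AdjoinRoot.lift ψ0 (φ (AdjoinRoot.root p)) h3, ?_, ?_⟩
    · apply AdjoinRoot.ringHom_ext
      · rw [RingHom.comp_assoc, hj1, ← RingHom.comp_assoc, h4, h1]
      · simp [hj2]
    · apply X_sub_cancel (x := φ (AdjoinRoot.root p))
      rw [← h2]
      conv_rhs => rw [← h4, ← Polynomial.map_map, ← hf]
      simp
  · intro C' _ ψ ψ' e1 e2
    have e3 : ψ (AdjoinRoot.root f) = ψ' (AdjoinRoot.root f) := by
      rw [← hj2]; exact congr($e1 _)
    apply AdjoinRoot.ringHom_ext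
    · apply h.uniq
      · rw [RingHom.comp_assoc, RingHom.comp_assoc, ← hj1, ← RingHom.comp_assoc, e1,
          RingHom.comp_assoc]
      · rw [← Polynomial.map_map, ← Polynomial.map_map, ← hf]
        simp [e2, e3]
    · exact e3

lemma finrank_of_addEquiv {A B : Type} [AddCommGroup A] [AddCommGroup B] {k : ℕ}
    (e : A ≃+ (Fin k → B)) [Module.Free ℤ B] [Module.Finite ℤ B] :
    Module.finrank ℤ A = k * Module.finrank ℤ B := by
  rw [e.toIntLinearEquiv.finrank_eq, Module.finrank_pi_fintype]; simp

lemma IsUF.main (k : ℕ) : ∀ {R F : Type} [CommRing R] [CommRing F] {i : R →+* F} {p : R[X]}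
    {f : F[X]} {n : ℕ} (_ : MonDeg p n) (_ : k ≤ n) (_ : IsUF i p k f)
    [Module.Free ℤ R] [Module.Finite ℤ R],
    Module.Free ℤ F ∧ Module.Finite ℤ F ∧
      Module.finrank ℤ F = Module.finrank ℤ R * n.choose k := by
  induction k with
  | zero =>
    intro R F _ _ i p f n hp hn h _ _
    have hone : ∀ {A : Type} [CommRing A] {g : A[X]}, MonDeg g 0 → g = 1 := by
      intro A _ g hg
      ext (_ | l)
      · simp [hg.1]
      · simp [hg.2 (l+1) (by omega), coeff_one]
    have h1 : ∀ (A : Type) [CommRing A], MonDeg (1 : A[X]) 0 := by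
      intro A _
      exact ⟨by simp, fun l hl => by simp [coeff_one]; omega⟩
    obtain ⟨ψ, e1, e2⟩ := h.lift R (RingHom.id R) 1 (h1 R) (one_dvd _)
    have e3 : i.comp ψ = RingHom.id F := by
      apply h.uniq
      · rw [RingHom.comp_assoc, e1]; rfl
      · rw [hone h.mon]; simp
    let e : R ≃+* F := RingEquiv.ofRingHom i ψ e3 e1
    let e' : R ≃ₗ[ℤ] F := e.toAddEquiv.toIntLinearEquiv
    refine ⟨Module.Free.of_equiv e', Module.Finite.equiv e', ?_⟩
    rw [← e'.finrank_eq]; simp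
  | succ k ih =>
    intro R F _ _ i p f n hp hn h _ _
    obtain ⟨n, rfl⟩ : ∃ n', n = n' + 1 := ⟨n - 1, by omega⟩
    obtain ⟨j, hj⟩ := h.step
    obtain ⟨eR⟩ := adj_equiv hp
    obtain ⟨eF⟩ := adj_equiv h.mon
    have : Module.Free ℤ (AdjoinRoot p) := Module.Free.of_equiv eR.symm.toIntLinearEquiv
    have : Module.Finite ℤ (AdjoinRoot p) := Module.Finite.equiv eR.symm.toIntLinearEquiv
    obtain ⟨a1, a2, a3⟩ := ih ((hp.map _).div _) (by omega) hj
    have b1 : Module.Free ℤ (Fin (k + 1) → F) := Module.Free.of_equiv eF.toIntLinearEquiv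
    have b2 : Module.Finite ℤ (Fin (k + 1) → F) := Module.Finite.equiv eF.toIntLinearEquiv
    let s : F →ₗ[ℤ] (Fin (k + 1) → F) := LinearMap.single ℤ (fun _ => F) 0
    have hs : Function.Injective s := Pi.single_injective (M := fun _ => F) 0
    have c2 : Module.Finite ℤ F := Module.Finite.of_injective s hs
    have c1 : Module.Free ℤ F := Module.Free.of_equiv (LinearEquiv.ofInjective s hs).symm
    refine ⟨c1, c2, ?_⟩
    rw [finrank_of_addEquiv eF, finrank_of_addEquiv eR] at a3
    have := Nat.add_one_mul_choose_eq n k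
    apply Nat.eq_of_mul_eq_mul_left (Nat.succ_pos k)
    simp only [Nat.succ_eq_add_one] at *
    rw [a3]
    linear_combination (Module.finrank ℤ R) * this

lemma aseq_zero (d : ℕ) : aseq d 0 = 1 := by simp [aseq]

lemma aseq_neg (d : ℕ) (k : ℤ) (h : k < 0) : aseq d k = 0 := by
  rw [aseq, dif_neg (by omega), if_neg (by omega)]

lemma aseq_big (d : ℕ) (k : ℤ) (h : (d : ℤ) < k) : aseq d k = 0 := by
  rw [aseq, dif_neg (by omega), if_neg (by omega)]

lemma aseq_succ (d : ℕ) (i : Fin d) : aseq d (((i : ℕ) + 1 : ℕ) : ℤ) = MvPolynomial.X i := by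
  rw [aseq, dif_pos (by omega)]
  congr 1; ext; simp

/-- first row replaced -/
noncomputable def hessMat (d r : ℕ) (v : ℕ → MvPolynomial (Fin d) ℤ) :
    Matrix (Fin r) (Fin r) (MvPolynomial (Fin d) ℤ) :=
  Matrix.of fun i j : Fin r => if (i : ℕ) = 0 then v j else
    aseq d (1 + ((j : ℕ) : ℤ) - ((i : ℕ) : ℤ))

lemma hess_sub0 (d r : ℕ) (v : ℕ → MvPolynomial (Fin d) ℤ) :
    ((hessMat d (r + 1 + 1) v).submatrix (Fin.succAbove 0) Fin.succ).det = dr d (r + 1) := by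
  unfold dr; congr 1; ext1 i j
  simp only [hessMat, Matrix.of_apply, Matrix.submatrix_apply, Fin.succAbove_zero, Fin.val_succ]
  rw [if_neg (by omega)]
  congr 1; push_cast; ring

lemma hess_sub1 (d r : ℕ) (v : ℕ → MvPolynomial (Fin d) ℤ) :
    (hessMat d (r + 1 + 1) v).submatrix (Fin.succAbove (Fin.succ 0)) Fin.succ =
      hessMat d (r + 1) (fun j => v (j + 1)) := by
  ext1 i j
  induction i using Fin.cases with
  | zero => simp [hessMat]
  | succ i =>
    have : (Fin.succAbove (Fin.succ 0) i.succ : Fin (r + 1 + 1)) = i.succ.succ := by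
      rw [Fin.succ_succAbove_succ]; simp
    simp only [hessMat, Matrix.of_apply, Matrix.submatrix_apply, this, Fin.val_succ]
    rw [if_neg (by omega), if_neg (by omega)]
    congr 1; push_cast; ring

lemma hess_ent2 (d r : ℕ) (v : ℕ → MvPolynomial (Fin d) ℤ) (i : Fin r) :
    hessMat d (r + 1 + 1) v i.succ.succ 0 = 0 := by
  simp only [hessMat, Matrix.of_apply]
  rw [if_neg (by simp), aseq_neg]
  simp only [Fin.val_succ, Fin.val_zero]; push_cast; omega

lemma hess_step (d r : ℕ) (v : ℕ → MvPolynomial (Fin d) ℤ) :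
    (hessMat d (r + 1 + 1) v).det =
      v 0 * dr d (r + 1) - (hessMat d (r + 1) (fun j => v (j + 1))).det := by
  have h3 : hessMat d (r + 1 + 1) v (Fin.succ 0) 0 = 1 := by
    simp [hessMat, aseq_zero]
  have h4 : hessMat d (r + 1 + 1) v 0 0 = v 0 := by simp [hessMat]
  rw [Matrix.det_succ_column_zero, Fin.sum_univ_succ, Fin.sum_univ_succ,
      Finset.sum_eq_zero (fun i _ => by rw [hess_ent2, mul_zero, zero_mul]),
      hess_sub0, hess_sub1, h3, h4]
  simp only [Fin.val_zero, Fin.val_succ]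
  ring

lemma hess_det (d r : ℕ) : ∀ v : ℕ → MvPolynomial (Fin d) ℤ,
    (hessMat d (r + 1) v).det = ∑ j ∈ Finset.range (r + 1), (-1) ^ j * v j * dr d (r - j) := by
  induction r with
  | zero => intro v; simp [hessMat, dr]
  | succ r ih =>
    intro v
    rw [hess_step, ih, Finset.sum_range_succ' _ (r + 1)]
    simp only [Nat.add_sub_add_right, Nat.sub_zero, pow_zero, one_mul, pow_succ]
    rw [sub_eq_add_neg, add_comm, ← Finset.sum_neg_distrib]
    congr 1
    apply Finset.sum_congr rfl
    intro j _; ring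

lemma dr_rec (d r : ℕ) : dr d (r + 1) =
    ∑ j ∈ Finset.range (r + 1), (-1) ^ j * aseq d ((j + 1 : ℕ) : ℤ) * dr d (r - j) := by
  rw [← hess_det d r (fun j => aseq d ((j + 1 : ℕ) : ℤ))]
  unfold dr; congr 1; ext1 i j
  simp only [hessMat, Matrix.of_apply]
  split_ifs with h
  · rw [h]; congr 1; push_cast; ring
  · rfl

noncomputable def revF (d : ℕ) : (MvPolynomial (Fin d) ℤ)[X] :=
  ∑ j ∈ Finset.range (d + 1), C ((-1) ^ j * aseq d (j : ℤ)) * X ^ j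

lemma revF_coeff (d l : ℕ) : (revF d).coeff l = (-1) ^ l * aseq d (l : ℤ) := by
  simp only [revF, finsetSum_coeff, coeff_C_mul, coeff_X_pow, mul_ite, mul_one, mul_zero,
    Finset.sum_ite_eq, Finset.mem_range]
  split_ifs with h
  · rfl
  · rw [aseq_big _ _ (by omega), mul_zero]

lemma revF_natDegree (d : ℕ) : (revF d).natDegree ≤ d := by
  rw [natDegree_le_iff_coeff_eq_zero]
  intro N hN
  rw [revF_coeff, aseq_big _ _ (by omega), mul_zero]

lemma revF_mul (d : ℕ) : ((revF d : (MvPolynomial (Fin d) ℤ)[X]) :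
    PowerSeries (MvPolynomial (Fin d) ℤ)) * PowerSeries.mk (dr d) = 1 := by
  ext1 s
  rw [PowerSeries.coeff_mul, Finset.Nat.sum_antidiagonal_eq_sum_range_succ_mk]
  simp only [coeff_coe, revF_coeff, PowerSeries.coeff_mk, PowerSeries.coeff_one]
  cases s with
  | zero => simp [aseq_zero, dr]
  | succ r =>
    rw [Finset.sum_range_succ', if_neg (by omega)]
    simp only [Nat.add_sub_add_right, Nat.sub_zero, pow_zero, one_mul, Nat.cast_zero, aseq_zero]
    rw [dr_rec, ← Finset.sum_add_distrib]
    apply Finset.sum_eq_zero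
    intro j _; ring

lemma revF_mul_map (d : ℕ) {S : Type} [CommRing S] (θ : MvPolynomial (Fin d) ℤ →+* S) :
    (((revF d).map θ : S[X]) : PowerSeries S) * PowerSeries.mk (fun r => θ (dr d r)) = 1 := by
  have := congrArg (PowerSeries.map θ) (revF_mul d)
  rw [map_mul, map_one, ← polynomial_map_coe] at this
  rw [← this]; congr 1

lemma dvd_iff (m d : ℕ) {S : Type} [CommRing S] (θ : MvPolynomial (Fin d) ℤ →+* S) :
    ((revF d).reflect d).map θ ∣ (X : S[X]) ^ (m + d) ↔
      ∀ r ∈ Set.Icc (m + 1) (m + d), θ (dr d r) = 0 := by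
  have hdeg : ((revF d).map θ).natDegree ≤ d := natDegree_map_le.trans (revF_natDegree d)
  have hmap : ((revF d).reflect d).map θ = ((revF d).map θ).reflect d := (reflect_map ..).symm
  have hmul := revF_mul_map d θ
  set Fr := (revF d).map θ
  set D := PowerSeries.mk (fun r => θ (dr d r)) with hD
  rw [hmap]
  constructor
  · rintro ⟨h, hh⟩ r hr
    have hmon : MonDeg (Fr.reflect d) d := by
      refine ⟨?_, ?_⟩
      · simp [coeff_reflect, Fr, revF_coeff, aseq_zero]
      · intro l hl
        rw [coeff_reflect, revAt_eq_self_of_lt hl]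
        exact coeff_eq_zero_of_natDegree_lt (by omega)
    have hhd : h.natDegree ≤ m := by
      nontriviality S
      by_cases h0 : h = 0
      · simp [h0]
      have := congrArg Polynomial.natDegree hh
      rw [hmon.monic.natDegree_mul' h0, natDegree_X_pow, hmon.natDegree] at this
      omega
    have h1 : Fr * h.reflect m = 1 := by
      have hF' : (Fr.reflect d).natDegree ≤ d := by
        rw [natDegree_le_iff_coeff_eq_zero]; exact hmon.2
      have := reflect_mul (Fr.reflect d) h hF' hhd
      rw [reflect_reflect, ← hh, add_comm d m, reflect_monomial, revAt_le le_rfl,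
        Nat.sub_self, pow_zero] at this
      exact this.symm
    have h2 : D = (h.reflect m : S[X]) := by
      have : (Fr : PowerSeries S) * (h.reflect m : S[X]) = 1 := by
        rw [← coe_mul, h1, coe_one]
      calc D = D * ((Fr : PowerSeries S) * (h.reflect m : S[X])) := by rw [this, mul_one]
        _ = (Fr * D) * (h.reflect m : S[X]) := by ring
        _ = _ := by rw [hmul, one_mul]
    have := congrArg (PowerSeries.coeff r) h2
    rw [hD, PowerSeries.coeff_mk, coeff_coe, coeff_reflect,
      revAt_eq_self_of_lt (by have := hr.1; omega)] at this
    rw [this]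
    exact coeff_eq_zero_of_natDegree_lt (by have := hr.1; omega)
  · intro h0
    have hg : (PowerSeries.trunc (m + 1) D).natDegree ≤ m :=
      Nat.lt_succ_iff.1 (PowerSeries.natDegree_trunc_lt D m)
    have h1 : Fr * PowerSeries.trunc (m + 1) D = 1 := by
      ext s
      by_cases hs : s ≤ m + d
      · have := congrArg (PowerSeries.coeff s) hmul
        rw [PowerSeries.coeff_mul, PowerSeries.coeff_one] at this
        rw [coeff_mul, coeff_one, ← this]
        apply Finset.sum_congr rfl
        rintro ⟨a, b⟩ hab
        rw [Finset.HasAntidiagonal.mem_antidiagonal] at hab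
        simp only at hab
        simp only [coeff_coe, PowerSeries.coeff_trunc]
        split_ifs with hb
        · rfl
        · rw [hD, PowerSeries.coeff_mk, h0 b ⟨by omega, by omega⟩]
      · rw [coeff_one, if_neg (by omega)]
        apply coeff_eq_zero_of_natDegree_lt
        have := natDegree_mul_le (p := Fr) (q := PowerSeries.trunc (m + 1) D)
        omega
    refine ⟨(PowerSeries.trunc (m + 1) D).reflect m, ?_⟩
    rw [← reflect_mul _ _ hdeg hg, h1, reflect_one, add_comm]

theorem isUF_Q (m d : ℕ) :
    IsUF (Int.castRingHom (MvPolynomial (Fin d) ℤ ⧸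
      Ideal.span ((fun r => dr d r) '' Set.Icc (m + 1) (m + d)))) (X ^ (m + d)) d
      (((revF d).reflect d).map (Ideal.Quotient.mk _)) := by
  have hmonA : MonDeg ((revF d).reflect d) d := by
    refine ⟨?_, ?_⟩
    · simp [coeff_reflect, revF_coeff, aseq_zero]
    · intro l hl
      rw [coeff_reflect, revAt_eq_self_of_lt hl]
      exact coeff_eq_zero_of_natDegree_lt (by have := revF_natDegree d; omega)
  have hc : ∀ i : Fin d, ((revF d).reflect d).coeff (d - 1 - i) =
      (-1) ^ ((i : ℕ) + 1) * MvPolynomial.X i := by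
    intro i
    rw [coeff_reflect, revAt_le (by omega), show d - (d - 1 - (i : ℕ)) = i + 1 by omega,
      revF_coeff, aseq_succ]
  refine ⟨hmonA.map _, ?_, ?_, ?_⟩
  · rw [Polynomial.map_pow, map_X, dvd_iff]
    intro r hr
    exact Ideal.Quotient.eq_zero_iff_mem.2 (Ideal.subset_span ⟨r, hr, rfl⟩)
  · intro S _ φ f' hf' hdvd
    let θ : MvPolynomial (Fin d) ℤ →+* S :=
      MvPolynomial.eval₂Hom φ (fun i => (-1) ^ ((i : ℕ) + 1) * f'.coeff (d - 1 - i))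
    have hθ : ((revF d).reflect d).map θ = f' := by
      ext l
      rcases lt_trichotomy l d with hl | rfl | hl
      · have := hc ⟨d - 1 - l, by omega⟩
        simp only at this
        rw [show d - 1 - (d - 1 - l) = l by omega] at this
        rw [coeff_map, this]
        simp only [θ, map_mul, map_pow, map_neg, map_one, MvPolynomial.coe_eval₂Hom,
          MvPolynomial.eval₂_X]
        rw [show d - 1 - (d - 1 - l) = l by omega, ← mul_assoc, ← pow_add, Even.neg_one_pow ⟨_, rfl⟩,
          one_mul]
      · rw [coeff_map, hmonA.1, hf'.1, map_one]
      · rw [coeff_map, hmonA.2 _ hl, hf'.2 _ hl, map_zero]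
    rw [Polynomial.map_pow, map_X, ← hθ, dvd_iff] at hdvd
    have hker : ∀ a ∈ Ideal.span ((fun r => dr d r) '' Set.Icc (m + 1) (m + d)), θ a = 0 := by
      intro a ha
      have : Ideal.span ((fun r => dr d r) '' Set.Icc (m + 1) (m + d)) ≤ RingHom.ker θ := by
        rw [Ideal.span_le]
        rintro _ ⟨r, hr, rfl⟩
        exact hdvd r hr
      exact this ha
    refine ⟨Ideal.Quotient.lift _ θ hker, RingHom.ext_int _ _, ?_⟩
    rw [Polynomial.map_map, Ideal.Quotient.lift_comp_mk, hθ]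
  · intro S _ ψ ψ' _ e
    apply Ideal.Quotient.ringHom_ext
    apply MvPolynomial.ringHom_ext'
    · exact RingHom.ext_int _ _
    · intro i
      rw [Polynomial.map_map, Polynomial.map_map] at e
      have := congrArg (fun q => Polynomial.coeff q (d - 1 - i)) e
      simp only [coeff_map, hc, map_mul, map_pow, map_neg, map_one] at this
      exact (IsUnit.mul_right_inj ((isUnit_one.neg).pow _)).1 this

theorem stmt_1 (m d : ℕ) (hm : 0 < m) (hd : 0 < d) :
    Module.Free ℤ
      (MvPolynomial (Fin d) ℤ ⧸ Ideal.span ((fun r => dr d r) '' Set.Icc (m + 1) (m + d))) ∧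
    Module.finrank ℤ
      (MvPolynomial (Fin d) ℤ ⧸ Ideal.span ((fun r => dr d r) '' Set.Icc (m + 1) (m + d)))
      = (m + d).choose d := by
  have hX : MonDeg ((X : ℤ[X]) ^ (m + d)) (m + d) :=
    MonDeg.of_monic (monic_X_pow _) (natDegree_X_pow _)
  obtain ⟨h1, _, h3⟩ := IsUF.main d hX (by omega) (isUF_Q m d)
  rw [Module.finrank_self, one_mul] at h3
  refine ⟨?_, ?_⟩
  · convert h1
  · convert h3
end

section
/- For every integer q ≥ 0, the polynomial δ_{2q+1} is divisible by a₁ in ℤ[a₁,a₂]; that is, there exists a polynomial P_q ∈ ℤ[a₁,a₂] with δ_{2q+1} = a₁ · P_q. -/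
/-- The sequence `a₀ = 1, a₁, a₂` (and `0` otherwise) of coefficients in `ℤ[a₁,a₂]`. -/
noncomputable def aseq2 (k : ℤ) : MvPolynomial (Fin 2) ℤ :=
  if k = 0 then 1
  else if k = 1 then MvPolynomial.X 0
  else if k = 2 then MvPolynomial.X 1
  else 0

/-- `δ_r := det((a_{1+j−i})_{1≤i,j≤r})`, with `δ₀ = 1`. -/
noncomputable def delta (r : ℕ) : MvPolynomial (Fin 2) ℤ :=
  Matrix.det (Matrix.of fun i j : Fin r => aseq2 (1 + ((j : ℕ) : ℤ) - ((i : ℕ) : ℤ)))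

/-- For every `q ≥ 0`, `δ_{2q+1}` is divisible by `a₁` in `ℤ[a₁,a₂]`. -/
theorem stmt_3 (q : ℕ) :
    ∃ P : MvPolynomial (Fin 2) ℤ, delta (2 * q + 1) = MvPolynomial.X 0 * P := by
  change MvPolynomial.X 0 ∣ delta (2 * q + 1)
  unfold delta
  rw [Matrix.det_apply]
  refine Finset.dvd_sum fun σ _ => ?_
  rw [Units.smul_def, zsmul_eq_mul]
  apply Dvd.dvd.mul_left
  by_contra hcon
  have h : ∀ i : Fin (2 * q + 1), ((σ i : ℕ) : ℤ) = i + 1 ∨ ((σ i : ℕ) : ℤ) + 1 = i := by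
    intro i
    by_contra hi
    push Not at hi
    apply hcon
    refine dvd_trans ?_ (Finset.dvd_prod_of_mem _ (Finset.mem_univ i))
    simp only [Matrix.of_apply, aseq2]
    rw [if_neg (by omega)]
    split_ifs
    · exact dvd_rfl
    · omega
    · exact dvd_zero _
  have h2 : ∀ i : Fin (2 * q + 1), (-1 : ℤ) ^ (σ i : ℕ) = -(-1) ^ (i : ℕ) := by
    intro i
    rcases h i with h | h
    · have : (σ i : ℕ) = i + 1 := by omega
      rw [this, pow_succ]; ring
    · have : (i : ℕ) = σ i + 1 := by omega
      rw [this, pow_succ]; ring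
  have h3 := Equiv.sum_comp σ (fun i : Fin (2 * q + 1) => (-1 : ℤ) ^ (i : ℕ))
  simp only [h2, Finset.sum_neg_distrib] at h3
  have h4 : ∑ i : Fin (2 * q + 1), (-1 : ℤ) ^ (i : ℕ) = 1 := by
    rw [Fin.sum_univ_eq_sum_range (fun i => (-1 : ℤ) ^ i), neg_one_geom_sum, if_neg]
    simp
  omega
end

section
/- Let n ≥ 1 and let x₁, x₂ ∈ ℂ. Then h_{2n}(x₁,x₂) = 0 if and only if there exists ζ ∈ ℂ with ζ^{2n+1} = 1, ζ ≠ 1 and x₁ = ζ x₂. -/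
/-- The complete homogeneous symmetric function `h_r(y₁,y₂) = ∑_{i=0}^r y₁^i y₂^{r−i}`. -/
def hc {R : Type*} [CommRing R] (r : ℕ) (y₁ y₂ : R) : R :=
  ∑ i ∈ Finset.range (r + 1), y₁ ^ i * y₂ ^ (r - i)

/-- For `n ≥ 1` and `x₁, x₂ ∈ ℂ`, `h_{2n}(x₁,x₂) = 0` iff `x₁ = ζ x₂` for some
`(2n+1)`-th root of unity `ζ ≠ 1`. -/
theorem stmt_6 (n : ℕ) (hn : 1 ≤ n) (x₁ x₂ : ℂ) :
    hc (2 * n) x₁ x₂ = 0 ↔ ∃ ζ : ℂ, ζ ^ (2 * n + 1) = 1 ∧ ζ ≠ 1 ∧ x₁ = ζ * x₂ := by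
  have key : hc (2 * n) x₁ x₂ * (x₁ - x₂) = x₁ ^ (2 * n + 1) - x₂ ^ (2 * n + 1) := by
    have := geom_sum₂_mul x₁ x₂ (2 * n + 1)
    simpa [hc] using this
  constructor
  · intro h
    rw [h, zero_mul] at key
    have key' : x₁ ^ (2 * n + 1) = x₂ ^ (2 * n + 1) := (sub_eq_zero.mp key.symm)
    by_cases h2 : x₂ = 0
    · have h1 : x₁ = 0 := by
        rw [h2, zero_pow (by omega)] at key'
        exact pow_eq_zero_iff (by omega) |>.mp key'
      have hp := Complex.isPrimitiveRoot_exp (2 * n + 1) (by omega)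
      exact ⟨_, hp.pow_eq_one, hp.ne_one (by omega), by rw [h1, h2, mul_zero]⟩
    · refine ⟨x₁ / x₂, ?_, ?_, (div_mul_cancel₀ _ h2).symm⟩
      · rw [div_pow, key', div_self (pow_ne_zero _ h2)]
      · intro h1
        have h12 : x₁ = x₂ := (div_eq_one_iff_eq h2).mp h1
        have hs : hc (2 * n) x₁ x₂ = ((2 * n + 1 : ℕ) : ℂ) * x₂ ^ (2 * n) := by
          rw [h12, hc, Finset.sum_congr rfl (g := fun _ => x₂ ^ (2 * n))]
          · rw [Finset.sum_const, Finset.card_range, nsmul_eq_mul]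
          · intro i hi
            rw [← pow_add]
            congr 1
            have := Finset.mem_range.mp hi
            omega
        rw [h] at hs
        exact mul_ne_zero (Nat.cast_ne_zero.mpr (by omega)) (pow_ne_zero _ h2) hs.symm
  · rintro ⟨ζ, hz, hz1, hx⟩
    by_cases h2 : x₂ = 0
    · have h1 : x₁ = 0 := by rw [hx, h2, mul_zero]
      rw [h1, h2, hc]
      apply Finset.sum_eq_zero
      intro i hi
      rw [← pow_add, zero_pow]
      omega
    · have hne : x₁ - x₂ ≠ 0 := by
        intro h0
        have h3 : (ζ - 1) * x₂ = 0 := by rw [← h0, hx]; ring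
        rcases mul_eq_zero.mp h3 with h4 | h4
        · exact hz1 (sub_eq_zero.mp h4)
        · exact h2 h4
      have h5 : x₁ ^ (2 * n + 1) - x₂ ^ (2 * n + 1) = 0 := by
        rw [hx, mul_pow, hz, one_mul, sub_self]
      rw [h5] at key
      exact (mul_eq_zero.mp key).resolve_right hne
end

section
/- For every integer n ≥ 1, the set {(x₁,x₂) ∈ ℂ² : h_{2n}(x₁,x₂) = 0 and h_n(x₁², x₂²) = 1} is finite and has exactly 4n² elements. -/
lemma hc_mul {R : Type*} [CommRing R] (r : ℕ) (x y : R) :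
    hc r x y * (x - y) = x ^ (r + 1) - y ^ (r + 1) := by
  have := (Commute.all x y).geom_sum₂_mul (r + 1)
  simpa [hc] using this

lemma hc_smul {R : Type*} [CommRing R] (r : ℕ) (z x y : R) :
    hc r (z * x) (z * y) = z ^ r * hc r x y := by
  unfold hc
  rw [Finset.mul_sum]
  refine Finset.sum_congr rfl fun i hi => ?_
  have : i + (r - i) = r := by have := Finset.mem_range.1 hi; omega
  conv_rhs => rw [← this, pow_add]
  simp only [this, mul_pow, Nat.add_sub_cancel_left]
  ring

lemma hc_key1 (n : ℕ) (z : ℂ) : hc (2 * n) z 1 = 0 ↔ z ^ (2 * n + 1) = 1 ∧ z ≠ 1 := by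
  have h := hc_mul (2 * n) z 1
  by_cases hz : z = 1
  · subst hz
    simp only [hc, one_pow, mul_one, ne_eq, not_true_eq_false, and_false, iff_false]
    simp only [Finset.sum_const, Finset.card_range, nsmul_eq_mul, mul_one]
    exact Nat.cast_ne_zero.2 (by omega)
  · have h1 : z - 1 ≠ 0 := sub_ne_zero.2 hz
    constructor
    · intro h0
      rw [h0, zero_mul, one_pow] at h
      exact ⟨(sub_eq_zero.1 h.symm), hz⟩
    · rintro ⟨h0, _⟩
      rw [h0, one_pow, sub_self] at h
      exact (mul_eq_zero.1 h).resolve_right h1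

lemma ne_neg_one' (n : ℕ) (z : ℂ) (h : z ^ (2 * n + 1) = 1) : z + 1 ≠ 0 := by
  intro h0
  have : z = -1 := by linear_combination h0
  subst this
  rw [Odd.neg_one_pow ⟨n, rfl⟩] at h
  norm_num at h

lemma hc_key2 (n : ℕ) (z : ℂ) (h : z ^ (2 * n + 1) = 1) (h1 : z ≠ 1) :
    hc n (z ^ 2) 1 * (z + 1) = 1 := by
  have h2 := hc_mul n (z ^ 2) 1
  have h3 : z - 1 ≠ 0 := sub_ne_zero.2 h1
  apply mul_right_cancel₀ h3
  have : (z ^ 2) ^ (n + 1) = z := by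
    rw [← pow_mul, show 2 * (n + 1) = (2 * n + 1) + 1 by ring, pow_succ, h, one_mul]
  rw [this, one_pow] at h2
  linear_combination h2

lemma mem_iff (n : ℕ) (hn : 1 ≤ n) (z y : ℂ) (hy : y ≠ 0) :
    (hc (2 * n) (z * y) y = 0 ∧ hc n ((z * y) ^ 2) (y ^ 2) = 1) ↔
      (z ^ (2 * n + 1) = 1 ∧ z ≠ 1) ∧ y ^ (2 * n) = z + 1 := by
  have e1 : hc (2 * n) (z * y) y = y ^ (2 * n) * hc (2 * n) z 1 := by
    rw [← hc_smul, mul_one, mul_comm z y]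
  have e2 : hc n ((z * y) ^ 2) (y ^ 2) = y ^ (2 * n) * hc n (z ^ 2) 1 := by
    rw [pow_mul, ← hc_smul, mul_one, mul_pow, mul_comm (z ^ 2)]
  rw [e1, e2, mul_eq_zero, or_iff_right (pow_ne_zero _ hy), hc_key1]
  refine and_congr_right fun ⟨h, h1⟩ => ?_
  have k := hc_key2 n z h h1
  have hz := ne_neg_one' n z h
  constructor
  · intro h; linear_combination (z + 1) * h - y ^ (2 * n) * k
  · intro h; rw [h, mul_comm, k]

lemma card_roots' (m : ℕ) (hm : 0 < m) (a : ℂ) (ha : a ≠ 0) :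
    (Polynomial.nthRoots m a).toFinset.card = m := by
  classical
  have hp := Complex.isPrimitiveRoot_exp m hm.ne'
  rw [Multiset.toFinset_card_of_nodup (hp.nthRoots_nodup ha), hp.card_nthRoots, if_pos]
  exact IsAlgClosed.exists_pow_nat_eq a hm

/-- For `n ≥ 1`, the set `{(x₁,x₂) ∈ ℂ² : h_{2n}(x₁,x₂) = 0, h_n(x₁²,x₂²) = 1}` is finite
with exactly `4n²` elements. -/
theorem stmt_7 (n : ℕ) (hn : 1 ≤ n) :
    {p : ℂ × ℂ | hc (2 * n) p.1 p.2 = 0 ∧ hc n (p.1 ^ 2) (p.2 ^ 2) = 1}.Finite ∧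
    {p : ℂ × ℂ | hc (2 * n) p.1 p.2 = 0 ∧ hc n (p.1 ^ 2) (p.2 ^ 2) = 1}.ncard = 4 * n ^ 2 := by
  classical
  let Z : Finset ℂ := (Polynomial.nthRoots (2 * n + 1) (1 : ℂ)).toFinset.erase 1
  have hZ : ∀ z, z ∈ Z ↔ z ^ (2 * n + 1) = 1 ∧ z ≠ 1 := by
    intro z
    simp only [Z, Finset.mem_erase, Multiset.mem_toFinset]
    rw [Polynomial.mem_nthRoots (by omega), and_comm]
  let T : Finset (Σ _ : ℂ, ℂ) :=
    Z.sigma fun z => (Polynomial.nthRoots (2 * n) (z + 1)).toFinset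
  have hT : ∀ q, q ∈ T ↔ (q.1 ^ (2 * n + 1) = 1 ∧ q.1 ≠ 1) ∧ q.2 ^ (2 * n) = q.1 + 1 := by
    intro q
    simp only [T, Finset.mem_sigma, hZ, Multiset.mem_toFinset]
    rw [Polynomial.mem_nthRoots (by omega)]
  have hne : ∀ q ∈ T, q.2 ≠ 0 := by
    intro q hq h0
    have := (hT q).1 hq
    have h2 := this.2
    rw [h0, zero_pow (by omega)] at h2
    exact ne_neg_one' n q.1 this.1.1 h2.symm
  let f : (Σ _ : ℂ, ℂ) → ℂ × ℂ := fun q => (q.1 * q.2, q.2)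
  have hS : {p : ℂ × ℂ | hc (2 * n) p.1 p.2 = 0 ∧ hc n (p.1 ^ 2) (p.2 ^ 2) = 1}
      = ((T.image f : Finset (ℂ × ℂ)) : Set (ℂ × ℂ)) := by
    ext ⟨x, y⟩
    simp only [Set.mem_ofPred_eq, Finset.coe_image, Set.mem_image, Finset.mem_coe]
    constructor
    · intro h
      have hy : y ≠ 0 := by
        rintro rfl
        have h1 := hc_mul (2 * n) x 0
        have h2 := h.2
        rw [h.1] at h1
        have hx : x = 0 := by
          rw [zero_mul, zero_pow (by omega), sub_zero] at h1
          exact pow_eq_zero_iff (by omega) |>.1 h1.symm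
        subst hx
        have h3 := hc_smul n (0 : ℂ) 0 0
        rw [zero_pow (by omega : n ≠ 0)] at h3
        simp only [mul_zero, zero_mul] at h3
        simp only [ne_eq, OfNat.ofNat_ne_zero, not_false_eq_true, zero_pow, h3] at h2
        exact zero_ne_one h2
      refine ⟨⟨x / y, y⟩, ?_, ?_⟩
      · rw [hT, ← mem_iff n hn _ _ hy]
        simpa only [div_mul_cancel₀ x hy] using h
      · simp only [f, div_mul_cancel₀ x hy]
    · rintro ⟨q, hq, he⟩
      simp only [f, Prod.mk.injEq] at he
      rw [← he.1, ← he.2, mem_iff n hn _ _ (hne q hq)]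
      exact (hT q).1 hq
  rw [hS]
  refine ⟨Finset.finite_toSet _, ?_⟩
  rw [Set.ncard_coe_finset, Finset.card_image_of_injOn, Finset.card_sigma]
  · rw [Finset.sum_congr rfl (g := fun _ => 2 * n), Finset.sum_const]
    · rw [Finset.card_erase_of_mem, card_roots' _ (by omega) _ one_ne_zero]
      · simp only [Nat.add_sub_cancel, smul_eq_mul]; ring
      · rw [Multiset.mem_toFinset, Polynomial.mem_nthRoots (by omega), one_pow]
    · intro z hz
      exact card_roots' _ (by omega) _ (ne_neg_one' n z ((hZ z).1 hz).1)
  · rintro ⟨a, b⟩ hq ⟨c, d⟩ hr h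
    have hb := hne _ hq
    simp only [f, Prod.mk.injEq] at h hb
    obtain ⟨h1, rfl⟩ := h
    rw [mul_right_cancel₀ hb h1]
end

section
/- For every integer n ≥ 1, the quotient ℂ-algebra ℂ[x₁,x₂]/(h_{2n}(x₁,x₂), h_n(x₁²,x₂²) − 1) is a finite-dimensional ℂ-vector space of dimension 4n². -/
lemma hc_succ {R : Type*} [CommRing R] (r : ℕ) (a b : R) :
    hc (r + 1) a b = a * hc r a b + b ^ (r + 1) := by
  unfold hc
  rw [Finset.sum_range_succ', Finset.mul_sum]
  simp only [Nat.add_sub_add_right, pow_succ, pow_zero, one_mul, Nat.sub_zero]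
  congr 1
  exact Finset.sum_congr rfl fun i _ => by ring

lemma hc_zero {R : Type*} [CommRing R] (a b : R) : hc 0 a b = 1 := by simp [hc]

lemma hc_sq {R : Type*} [CommRing R] (n : ℕ) (a b : R) :
    hc n (a ^ 2) (b ^ 2) * (a + b) = a * hc (2 * n) a b + b ^ (2 * n + 1) := by
  rw [← hc_succ]
  induction n with
  | zero => rw [hc_succ, hc_zero, hc_zero]; ring
  | succ n ih =>
    rw [hc_succ, show 2 * (n + 1) + 1 = (2 * n + 1) + 1 + 1 by ring, hc_succ, hc_succ (2 * n + 1)]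
    rw [add_mul, mul_assoc, ih]
    ring

lemma hc_scale {R : Type*} [CommRing R] (n : ℕ) (c b : R) :
    hc n (b * c) b = b ^ n * ∑ i ∈ Finset.range (n + 1), c ^ i := by
  unfold hc
  rw [Finset.mul_sum]
  refine Finset.sum_congr rfl fun i hi => ?_
  have : n = i + (n - i) := by have := Finset.mem_range.mp hi; omega
  conv_rhs => rw [this, pow_add]
  rw [mul_pow]; ring

lemma hc_map {R S : Type*} [CommRing R] [CommRing S] (f : R →+* S) (n : ℕ) (a b : R) :
    f (hc n a b) = hc n (f a) (f b) := by simp [hc]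

/-- key relations in the quotient -/
lemma key1 {R : Type*} [CommRing R] (n : ℕ) (a b : R) (h1 : hc (2 * n) a b = 0)
    (h2 : hc n (a ^ 2) (b ^ 2) = 1) : a = b * (b ^ (2 * n) - 1) := by
  have := hc_sq n a b
  rw [h1, h2] at this
  linear_combination this

lemma key2 {R : Type*} [CommRing R] (n : ℕ) (hn : 1 ≤ n) (a b : R) (h1 : hc (2 * n) a b = 0)
    (h2 : hc n (a ^ 2) (b ^ 2) = 1) :
    ∑ i ∈ Finset.range (2 * n + 1), (b ^ (2 * n) - 1) ^ i = 0 := by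
  have ha := key1 n a b h1 h2
  rw [ha, hc_scale] at h1
  rw [ha, mul_pow, hc_scale] at h2
  have hu : IsUnit b := by
    obtain ⟨m, rfl⟩ : ∃ m, n = m + 1 := ⟨n - 1, by omega⟩
    rw [← pow_mul, show 2 * (m + 1) = (2 * m + 1) + 1 by ring, pow_succ', mul_assoc] at h2
    exact IsUnit.of_mul_eq_one _ h2
  exact (hu.pow _).mul_right_eq_zero.mp h1

open Polynomial in
/-- the univariate polynomial -/
noncomputable def PP (n : ℕ) : ℂ[X] := ∑ i ∈ Finset.range (2 * n + 1), (X ^ (2 * n) - 1) ^ i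

open Polynomial in
lemma PP_monic (n : ℕ) (hn : 1 ≤ n) : (PP n).Monic ∧ (PP n).natDegree = 4 * n ^ 2 := by
  have hm : (X ^ (2 * n) - 1 : ℂ[X]).Monic := by
    simpa using monic_X_pow_sub_C (1 : ℂ) (n := 2 * n) (by omega)
  have hd : (X ^ (2 * n) - 1 : ℂ[X]).natDegree = 2 * n := by
    simpa using natDegree_X_pow_sub_C (n := 2 * n) (r := (1 : ℂ))
  have hP : (PP n).Monic := hm.geom_sum (by omega) (by omega)
  refine ⟨hP, ?_⟩
  have hm2 : (X ^ (2 * n) - 1 - 1 : ℂ[X]).natDegree = 2 * n := by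
    have : (X ^ (2 * n) - 1 - 1 : ℂ[X]) = X ^ (2 * n) - C 2 := by
      rw [show (C 2 : ℂ[X]) = 2 from rfl]; ring
    rw [this, natDegree_X_pow_sub_C]
  have h := geom_sum_mul (X ^ (2 * n) - 1 : ℂ[X]) (2 * n + 1)
  have h' := congrArg natDegree h
  change (PP n * _).natDegree = _ at h'
  rw [hP.natDegree_mul', hm2] at h'
  · rw [← C_1, natDegree_sub_C, C_1, natDegree_pow, hd] at h'
    nlinarith
  · intro h0; rw [h0] at hm2; simp at hm2; omega

open Polynomial in
lemma fwd (n : ℕ) {R : Type*} [CommRing R] (b : R)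
    (h : ∑ i ∈ Finset.range (2 * n + 1), (b ^ (2 * n) - 1) ^ i = 0) :
    hc (2 * n) (b * (b ^ (2 * n) - 1)) b = 0 ∧
    hc n ((b * (b ^ (2 * n) - 1)) ^ 2) (b ^ 2) = 1 := by
  refine ⟨by rw [hc_scale, h, mul_zero], ?_⟩
  rw [mul_pow, hc_scale, ← pow_mul]
  set u := b ^ (2 * n) - 1 with hu
  have hb : b ^ (2 * n) = u + 1 := by rw [hu]; ring
  have h3 := hc_sq n u 1
  have e : ∀ m (c : R), hc m c 1 = ∑ i ∈ Finset.range (m + 1), c ^ i := by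
    intro m c; simp [hc]
  rw [one_pow, e, e, h] at h3
  rw [hb, mul_comm, h3]; simp

/-- For `n ≥ 1`, the quotient `ℂ[x₁,x₂]/(h_{2n}(x₁,x₂), h_n(x₁²,x₂²) − 1)` is a
finite-dimensional `ℂ`-vector space of dimension `4n²`. -/
theorem stmt_8 (n : ℕ) (hn : 1 ≤ n) :
    FiniteDimensional ℂ
      (MvPolynomial (Fin 2) ℂ ⧸
        Ideal.span {hc (2 * n) (MvPolynomial.X 0 : MvPolynomial (Fin 2) ℂ) (MvPolynomial.X 1),
          hc n ((MvPolynomial.X 0 : MvPolynomial (Fin 2) ℂ) ^ 2) (MvPolynomial.X 1 ^ 2) - 1}) ∧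
    Module.finrank ℂ
      (MvPolynomial (Fin 2) ℂ ⧸
        Ideal.span {hc (2 * n) (MvPolynomial.X 0 : MvPolynomial (Fin 2) ℂ) (MvPolynomial.X 1),
          hc n ((MvPolynomial.X 0 : MvPolynomial (Fin 2) ℂ) ^ 2) (MvPolynomial.X 1 ^ 2) - 1})
      = 4 * n ^ 2 := by
  set I : Ideal (MvPolynomial (Fin 2) ℂ) :=
    Ideal.span {hc (2 * n) (MvPolynomial.X 0 : MvPolynomial (Fin 2) ℂ) (MvPolynomial.X 1),
          hc n ((MvPolynomial.X 0 : MvPolynomial (Fin 2) ℂ) ^ 2) (MvPolynomial.X 1 ^ 2) - 1} with hI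
  obtain ⟨hP, hd⟩ := PP_monic n hn
  let a : MvPolynomial (Fin 2) ℂ ⧸ I := Ideal.Quotient.mkₐ ℂ I (MvPolynomial.X 0)
  let b : MvPolynomial (Fin 2) ℂ ⧸ I := Ideal.Quotient.mkₐ ℂ I (MvPolynomial.X 1)
  have h1 : hc (2 * n) a b = 0 := by
    have : Ideal.Quotient.mk I (hc (2 * n) (MvPolynomial.X 0) (MvPolynomial.X 1)) = 0 :=
      Ideal.Quotient.eq_zero_iff_mem.mpr (Ideal.subset_span (by simp))
    rwa [hc_map] at this
  have h2 : hc n (a ^ 2) (b ^ 2) = 1 := by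
    have : Ideal.Quotient.mk I
        (hc n ((MvPolynomial.X 0) ^ 2) (MvPolynomial.X 1 ^ 2) - 1) = 0 :=
      Ideal.Quotient.eq_zero_iff_mem.mpr (Ideal.subset_span (by simp))
    rw [map_sub, hc_map, map_pow, map_pow, map_one, sub_eq_zero] at this
    exact this
  have ha := key1 n a b h1 h2
  have hb := key2 n hn a b h1 h2
  let r : AdjoinRoot (PP n) := AdjoinRoot.root (PP n)
  have hr : ∑ i ∈ Finset.range (2 * n + 1), (r ^ (2 * n) - 1) ^ i = 0 := by
    have : AdjoinRoot.mk (PP n) (PP n) = 0 := AdjoinRoot.mk_self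
    conv_lhs at this => arg 2; unfold PP
    simpa using this
  obtain ⟨f1, f2⟩ := fwd n r hr
  let F0 : MvPolynomial (Fin 2) ℂ →ₐ[ℂ] AdjoinRoot (PP n) :=
    MvPolynomial.aeval ![r * (r ^ (2 * n) - 1), r]
  have hF0 : ∀ x ∈ I, F0 x = 0 := by
    intro x hx
    have hle : I ≤ RingHom.ker (F0 : MvPolynomial (Fin 2) ℂ →+* AdjoinRoot (PP n)) := by
      rw [hI, Ideal.span_le]
      rintro y (rfl | rfl)
      · rw [SetLike.mem_coe, RingHom.mem_ker, hc_map]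
        simpa [F0] using f1
      · rw [SetLike.mem_coe, RingHom.mem_ker, map_sub, hc_map, map_one, sub_eq_zero]
        simpa [F0] using f2
    exact hle hx
  let F : (MvPolynomial (Fin 2) ℂ ⧸ I) →ₐ[ℂ] AdjoinRoot (PP n) := Ideal.Quotient.liftₐ I F0 hF0
  let G : AdjoinRoot (PP n) →ₐ[ℂ] (MvPolynomial (Fin 2) ℂ ⧸ I) :=
    AdjoinRoot.liftAlgHom (PP n) (Algebra.ofId _ _) b (by
      simpa [PP, Polynomial.eval₂_finset_sum] using hb)
  have hG : G r = b := AdjoinRoot.liftAlgHom_root ..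
  have hFb : F b = r := by
    change F0 (MvPolynomial.X 1) = r
    simp [F0]
  have hFa : F a = r * (r ^ (2 * n) - 1) := by
    change F0 (MvPolynomial.X 0) = _
    simp [F0]
  have hFG : F.comp G = AlgHom.id ℂ _ := by
    apply AdjoinRoot.algHom_ext
    change F (G r) = r
    rw [hG, hFb]
  have hGF : G.comp F = AlgHom.id ℂ _ := by
    apply Ideal.Quotient.algHom_ext
    apply MvPolynomial.algHom_ext
    intro i
    fin_cases i
    · change G (F a) = a
      rw [hFa, map_mul, map_sub, map_pow, hG, map_one, ← ha]
    · change G (F b) = b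
      rw [hFb, hG]
  let e : (MvPolynomial (Fin 2) ℂ ⧸ I) ≃ₐ[ℂ] AdjoinRoot (PP n) := AlgEquiv.ofAlgHom F G hFG hGF
  let pb := AdjoinRoot.powerBasis' hP
  have hfin : FiniteDimensional ℂ (AdjoinRoot (PP n)) := pb.finite
  refine ⟨Module.Finite.equiv e.symm.toLinearEquiv, ?_⟩
  rw [e.toLinearEquiv.finrank_eq, pb.finrank, AdjoinRoot.powerBasis'_dim, hd]
end

section
/- Let 2 ≤ m ≤ n be integers and set k := n − m. The map sending a k-strict partition λ = (λ₁ ≥ … ≥ λ_m ≥ 0) with λ₁ ≤ 2n − m to the tuple P = (p₁,…,p_m) defined by p_j = n + k + 1 − λ_j + #{i < j : λ_i + λ_j ≤ 2k + j − i} is a bijection onto the set of index sets, i.e. tuples P = (p₁ < ⋯ < p_m) with p_j ∈ {1,…,2n} and p_i + p_j ≠ 2n + 1 for all i, j; its inverse sends an index set P to the k-strict partition λ with λ_j = n + k + 1 − p_j + #{i < j : p_i + p_j > 2n + 1}. -/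
/-- The set of `k`-strict partitions `λ = (λ₁ ≥ … ≥ λ_m ≥ 0)` with `λ₁ ≤ 2n − m`:
weakly decreasing, nonnegative, with `λ_j > k ⇒ λ_j > λ_{j+1}`. -/
def kStrictSet (m n k : ℕ) (hm : 0 < m) : Set (Fin m → ℤ) :=
  {l | Antitone l ∧ (∀ j, 0 ≤ l j) ∧ l ⟨0, hm⟩ ≤ 2 * (n : ℤ) - m ∧
    ∀ (j : ℕ) (h : j + 1 < m), (k : ℤ) < l ⟨j, by omega⟩ → l ⟨j + 1, h⟩ < l ⟨j, by omega⟩}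

/-- The set of index sets of length `m` for `IG(m,2n)`: tuples `p₁ < ⋯ < p_m` in `{1,…,2n}`
with `p_i + p_j ≠ 2n + 1` for all `i, j`. -/
def indexSet (m n : ℕ) : Set (Fin m → ℤ) :=
  {p | StrictMono p ∧ (∀ j, 1 ≤ p j) ∧ (∀ j, p j ≤ 2 * (n : ℤ)) ∧
    ∀ i j, p i + p j ≠ 2 * (n : ℤ) + 1}

/-- The map `λ ↦ P`, `p_j = n + k + 1 − λ_j + #{i < j : λ_i + λ_j ≤ 2k + j − i}`. -/
def phiMap (m n k : ℕ) (l : Fin m → ℤ) : Fin m → ℤ := fun j =>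
  (n : ℤ) + k + 1 - l j +
    ((Finset.univ.filter fun i : Fin m =>
      i < j ∧ l i + l j ≤ 2 * (k : ℤ) + ((j : ℕ) : ℤ) - ((i : ℕ) : ℤ)).card : ℤ)

lemma cnt_Ioo {m : ℕ} (p : Fin m → ℤ) (hp : StrictMono p) (S : Finset (Fin m)) (a b : ℤ)
    (h : ∀ i ∈ S, a < p i ∧ p i < b) : S.card ≤ (b - a - 1).toNat := by
  rw [← Int.card_Ioo]
  exact Finset.card_le_card_of_injOn p (fun i hi => by simpa using h i hi) hp.injective.injOn

section fwd
variable {m n k : ℕ} {l : Fin m → ℤ}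

def cC (k : ℕ) (l : Fin m → ℤ) (i j : Fin m) : Prop :=
  l i + l j ≤ 2 * (k : ℤ) + ((j : ℕ) : ℤ) - ((i : ℕ) : ℤ)

lemma strict_chain (h1 : Antitone l)
    (h4 : ∀ (j : ℕ) (h : j + 1 < m), (k : ℤ) < l ⟨j, by omega⟩ → l ⟨j + 1, h⟩ < l ⟨j, by omega⟩)
    (i : Fin m) (d : ℕ) (hd : (i : ℕ) + d < m) (hk : (k : ℤ) < l ⟨i + d, hd⟩) :
    l ⟨i + d, hd⟩ + d ≤ l i := by
  induction d with
  | zero => simp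
  | succ d ih =>
    have hle : l ⟨i + (d + 1), hd⟩ ≤ l ⟨i + d, by omega⟩ := h1 (by simp [Fin.le_def])
    have := ih (by omega) (by omega)
    have := h4 (i + d) (by omega) (by omega)
    have e : (⟨(i : ℕ) + d + 1, by omega⟩ : Fin m) = ⟨i + (d + 1), hd⟩ := by ext; simp; omega
    rw [e] at this
    push_cast
    omega

lemma cC_mono (h1 : Antitone l)
    (h4 : ∀ (j : ℕ) (h : j + 1 < m), (k : ℤ) < l ⟨j, by omega⟩ → l ⟨j + 1, h⟩ < l ⟨j, by omega⟩)
    {i i' j : Fin m} (hi : i ≤ i') (hj : i' < j) (h : cC k l i j) : cC k l i' j := by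
  unfold cC at *
  have a := h1 hj.le
  by_cases hk : (k : ℤ) < l i'
  · have hi' : (i : ℕ) ≤ i' := hi
    have e : (⟨(i : ℕ) + ((i' : ℕ) - i), by omega⟩ : Fin m) = i' := by ext; simp; omega
    have := strict_chain h1 h4 i (i' - i) (by omega) (by rw [e]; exact hk)
    rw [e] at this
    omega
  · have : (i' : ℕ) < j := hj
    omega

lemma cC_mono2 (h1 : Antitone l) {i j j' : Fin m} (hj : j ≤ j') (h : cC k l i j) :
    cC k l i j' := by
  unfold cC at *
  have a := h1 hj
  have : (j : ℕ) ≤ j' := hj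
  omega

open Classical in
lemma fwd_pair (h1 : Antitone l)
    (h4 : ∀ (j : ℕ) (h : j + 1 < m), (k : ℤ) < l ⟨j, by omega⟩ → l ⟨j + 1, h⟩ < l ⟨j, by omega⟩)
    {i j : Fin m} (hij : i < j) :
    (cC k l i j → phiMap m n k l i + phiMap m n k l j > 2 * n + 1) ∧
    (¬ cC k l i j → phiMap m n k l i + phiMap m n k l j < 2 * n + 1) := by
  have hij' : (i : ℕ) < j := hij
  constructor
  · intro h
    have : (Finset.Ico i j).card ≤ (Finset.univ.filter fun i : Fin m =>
      i < j ∧ l i + l j ≤ 2 * (k : ℤ) + ((j : ℕ) : ℤ) - ((i : ℕ) : ℤ)).card := by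
      apply Finset.card_le_card
      intro x hx
      simp only [Finset.mem_Ico, Finset.mem_filter, Finset.mem_univ, true_and] at *
      exact ⟨hx.2, cC_mono h1 h4 hx.1 hx.2 h⟩
    rw [Fin.card_Ico] at this
    unfold cC at h
    unfold phiMap
    omega
  · intro h
    have a : (Finset.univ.filter fun i : Fin m =>
      i < j ∧ l i + l j ≤ 2 * (k : ℤ) + ((j : ℕ) : ℤ) - ((i : ℕ) : ℤ)).card ≤
        (Finset.Ioo i j).card := by
      apply Finset.card_le_card
      intro x hx
      simp only [Finset.mem_Ioo, Finset.mem_filter, Finset.mem_univ, true_and] at *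
      refine ⟨?_, hx.1⟩
      by_contra hc
      exact h (cC_mono h1 h4 (not_lt.1 hc) hij hx.2)
    have b : (Finset.univ.filter fun x : Fin m =>
      x < i ∧ l x + l i ≤ 2 * (k : ℤ) + ((i : ℕ) : ℤ) - ((x : ℕ) : ℤ)).card = 0 := by
      rw [Finset.card_eq_zero, Finset.filter_eq_empty_iff]
      intro x _ hx
      exact h (cC_mono h1 h4 hx.1.le hij (cC_mono2 h1 hij.le hx.2))
    rw [Fin.card_Ioo] at a
    unfold cC at h
    unfold phiMap
    omega

lemma fwd_mono (h1 : Antitone l)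
    (h4 : ∀ (j : ℕ) (h : j + 1 < m), (k : ℤ) < l ⟨j, by omega⟩ → l ⟨j + 1, h⟩ < l ⟨j, by omega⟩) :
    StrictMono (phiMap m n k l) := by
  have step : ∀ (j : ℕ) (h : j + 1 < m),
      phiMap m n k l ⟨j, by omega⟩ < phiMap m n k l ⟨j + 1, h⟩ := by
    intro j h
    set a : Fin m := ⟨j, by omega⟩ with ha
    set b : Fin m := ⟨j + 1, h⟩ with hb
    have hab : a < b := by simp [ha, hb, Fin.lt_def]
    have hl : l b ≤ l a := h1 hab.le
    have hs := h4 j h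
    rw [← ha, ← hb] at hs
    have sub : (Finset.univ.filter fun i : Fin m =>
        i < a ∧ l i + l a ≤ 2 * (k : ℤ) + ((a : ℕ) : ℤ) - ((i : ℕ) : ℤ)) ⊆
        (Finset.univ.filter fun i : Fin m =>
        i < b ∧ l i + l b ≤ 2 * (k : ℤ) + ((b : ℕ) : ℤ) - ((i : ℕ) : ℤ)) := by
      intro x hx
      simp only [Finset.mem_filter, Finset.mem_univ, true_and] at *
      exact ⟨hx.1.trans hab, cC_mono2 h1 hab.le hx.2⟩
    by_cases hk : (k : ℤ) < l a
    · have := Finset.card_le_card sub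
      have := hs hk
      unfold phiMap
      omega
    · have := Finset.card_lt_card (Finset.ssubset_iff_subset_ne.2 ⟨sub, fun e => by
        have : a ∈ (Finset.univ.filter fun i : Fin m =>
          i < b ∧ l i + l b ≤ 2 * (k : ℤ) + ((b : ℕ) : ℤ) - ((i : ℕ) : ℤ)) := by
          simp only [Finset.mem_filter, Finset.mem_univ, true_and]
          refine ⟨hab, ?_⟩
          simp only [ha, hb] at *
          push_cast
          omega
        rw [← e] at this
        simp at this⟩)
      unfold phiMap
      omega
  cases m with
  | zero => intro a; exact a.elim0
  | succ m =>
    rw [Fin.strictMono_iff_lt_succ]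
    intro i
    exact step i (by omega)
end fwd

section bwd
variable {m n k : ℕ} {p : Fin m → ℤ}

def dS (n : ℕ) (p : Fin m → ℤ) (j : Fin m) : Finset (Fin m) :=
  Finset.univ.filter fun i : Fin m => i < j ∧ p i + p j > 2 * (n : ℤ) + 1

def psi (n k : ℕ) (p : Fin m → ℤ) (j : Fin m) : ℤ := (n : ℤ) + k + 1 - p j + (dS n p j).card

lemma mem_dS {i j : Fin m} : i ∈ dS n p j ↔ i < j ∧ p i + p j > 2 * (n : ℤ) + 1 := by simp [dS]

lemma dS_empty (h1 : StrictMono p) {j : Fin m} (h : p j ≤ n) : (dS n p j).card = 0 := by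
  rw [Finset.card_eq_zero, Finset.eq_empty_iff_forall_notMem]
  intro x hx
  rw [mem_dS] at hx
  have := h1 hx.1
  omega

lemma dS_le (h1 : StrictMono p) (h3 : ∀ i j, p i + p j ≠ 2 * (n : ℤ) + 1) (j : Fin m) :
    (dS n p j).card ≤ (p j - n - 1).toNat := by
  have : (dS n p j).card ≤ (Finset.Ioo (n : ℤ) (p j)).card := by
    apply Finset.card_le_card_of_injOn (fun i => max (p i) (2 * n + 1 - p i))
    · intro x hx
      have hx := mem_dS.1 hx
      have := h1 hx.1
      simp only [Finset.coe_Ioo, Set.mem_Ioo]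
      omega
    · intro x _ y _ hxy
      have := h3 x y
      simp only at hxy
      apply h1.injective
      omega
  rw [Int.card_Ioo] at this
  omega

lemma bwd_pair (h1 : StrictMono p) (h3 : ∀ i j, p i + p j ≠ 2 * (n : ℤ) + 1) {i j : Fin m}
    (hij : i < j) : psi n k p i + psi n k p j ≤ 2 * (k : ℤ) + ((j : ℕ) : ℤ) - ((i : ℕ) : ℤ) ↔
      p i + p j > 2 * (n : ℤ) + 1 := by
  have hij' : (i : ℕ) < j := hij
  have hp := h1 hij
  constructor
  · intro h
    by_contra hc
    have ne := h3 i j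
    have key : (Finset.Ioo i j \ dS n p j).card ≤ ((2 * n + 1 - p j) - p i - 1).toNat := by
      apply cnt_Ioo p h1
      intro x hx
      rw [Finset.mem_sdiff, Finset.mem_Ioo, mem_dS] at hx
      have := h1 hx.1.1
      have := h3 x j
      have : ¬ (p x + p j > 2 * n + 1) := fun h => hx.2 ⟨hx.1.2, h⟩
      omega
    have := Finset.le_card_sdiff (dS n p j) (Finset.Ioo i j)
    rw [Fin.card_Ioo] at this
    unfold psi at h
    omega
  · intro h
    have a := dS_le h1 h3 i
    have c : dS n p j ⊆ Finset.Ico i j ∪ dS n p i ∪ (((dS n p j).filter (· < i)) \ dS n p i) := by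
      intro x hx
      simp only [Finset.mem_union, Finset.mem_sdiff, Finset.mem_filter, Finset.mem_Ico]
      have := (mem_dS.1 hx).1
      by_cases hxi : x < i
      · tauto
      · have := not_lt.1 hxi
        tauto
    have c1 := (Finset.card_le_card c).trans ((Finset.card_union_le _ _).trans
      (Nat.add_le_add_right (Finset.card_union_le _ _) _))
    rw [Fin.card_Ico] at c1
    have e : (((dS n p j).filter (· < i)) \ dS n p i).card ≤
        (min (p i) (2 * n + 1 - p i) - (2 * n + 1 - p j) - 1).toNat := by
      apply cnt_Ioo p h1
      intro x hx
      simp only [Finset.mem_sdiff, Finset.mem_filter, mem_dS] at hx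
      have := h1 hx.1.2
      have := h3 x i
      have : ¬ (p x + p i > 2 * n + 1) := fun h => hx.2 ⟨hx.1.2, h⟩
      omega
    unfold psi
    omega

lemma bwd_step (h1 : StrictMono p) (h3 : ∀ i j, p i + p j ≠ 2 * (n : ℤ) + 1) {a b : Fin m}
    (hab : (b : ℕ) = a + 1) : psi n k p b ≤ psi n k p a ∧
      ((k : ℤ) < psi n k p a → psi n k p b < psi n k p a) := by
  have hlt : a < b := by rw [Fin.lt_def]; omega
  have hp := h1 hlt
  by_cases hD : p a + p b > 2 * (n : ℤ) + 1
  · have a1 := dS_le h1 h3 a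
    have c := Finset.card_le_card_sdiff_add_card (s := dS n p b) (t := dS n p a)
    by_cases hn : p a ≤ n
    · have e : (dS n p b \ dS n p a).card ≤
          ((2 * n + 1 - p a) - (2 * n + 1 - p b) - 1).toNat := by
        apply cnt_Ioo p h1
        intro x hx
        simp only [Finset.mem_sdiff, mem_dS] at hx
        have : p x ≤ p a := h1.monotone (by rw [Fin.le_def]; have := Fin.lt_def.1 hx.1.1; omega)
        omega
      unfold psi
      omega
    · have e : ((dS n p b \ dS n p a).erase a).card ≤
          ((2 * n + 1 - p a) - (2 * n + 1 - p b) - 1).toNat := by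
        apply cnt_Ioo p h1
        intro x hx
        simp only [Finset.mem_erase, Finset.mem_sdiff, mem_dS] at hx
        have hxa : x < a := by
          have := Fin.lt_def.1 hx.2.1.1
          have : (x : ℕ) ≠ a := fun h => hx.1 (Fin.ext h)
          rw [Fin.lt_def]; omega
        have := h3 x a
        have : ¬ (p x + p a > 2 * n + 1) := fun h => hx.2.2 ⟨hxa, h⟩
        omega
      have := Finset.pred_card_le_card_erase (s := dS n p b \ dS n p a) (a := a)
      unfold psi
      omega
  · have e : (dS n p b).card = 0 := by
      rw [Finset.card_eq_zero, Finset.eq_empty_iff_forall_notMem]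
      intro x hx
      rw [mem_dS] at hx
      have : p x ≤ p a := h1.monotone (by rw [Fin.le_def]; have := Fin.lt_def.1 hx.1; omega)
      omega
    unfold psi
    omega

lemma bwd_last (h1 : StrictMono p) (h0 : ∀ j, 1 ≤ p j) (h2 : ∀ j, p j ≤ 2 * (n : ℤ))
    (h3 : ∀ i j, p i + p j ≠ 2 * (n : ℤ) + 1)
    (hk : n = m + k) {j : Fin m} (hj : (j : ℕ) + 1 = m) : 0 ≤ psi n k p j := by
  have key : (Finset.Iio j \ dS n p j).card ≤ ((2 * n + 1 - p j) - 0 - 1).toNat := by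
    apply cnt_Ioo p h1
    intro x hx
    rw [Finset.mem_sdiff, Finset.mem_Iio, mem_dS] at hx
    have := h0 x
    have := h3 x j
    have : ¬ (p x + p j > 2 * n + 1) := fun h => hx.2 ⟨hx.1, h⟩
    omega
  have := Finset.le_card_sdiff (dS n p j) (Finset.Iio j)
  rw [Fin.card_Iio] at this
  have := h2 j
  unfold psi
  omega

lemma bwd_anti (h1 : StrictMono p) (h3 : ∀ i j, p i + p j ≠ 2 * (n : ℤ) + 1) :
    Antitone (psi n k p) := by
  cases m with
  | zero => intro a; exact a.elim0
  | succ m =>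
    rw [Fin.antitone_iff_succ_le]
    intro i
    exact (bwd_step h1 h3 (by simp)).1

lemma bwd_mem (hm : 0 < m) (hk : n = m + k) (hp : p ∈ indexSet m n) :
    psi n k p ∈ kStrictSet m n k hm := by
  obtain ⟨h1, h0, h2, h3⟩ := hp
  have anti := bwd_anti (k := k) h1 h3
  refine ⟨anti, ?_, ?_, ?_⟩
  · intro j
    have := bwd_last (k := k) h1 h0 h2 h3 hk (j := ⟨m - 1, by omega⟩) (by simp; omega)
    exact this.trans (anti (by rw [Fin.le_def]; simp; omega))
  · have e : (dS n p ⟨0, hm⟩).card = 0 := by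
      rw [Finset.card_eq_zero, Finset.eq_empty_iff_forall_notMem]
      intro x hx
      have := Fin.lt_def.1 (mem_dS.1 hx).1
      simp at this
    have := h0 ⟨0, hm⟩
    unfold psi
    omega
  · intro j h hlt
    exact (bwd_step (k := k) h1 h3 (a := ⟨j, by omega⟩) (b := ⟨j + 1, h⟩) rfl).2 hlt

lemma bwd_inv (hp : p ∈ indexSet m n) : phiMap m n k (psi n k p) = p := by
  obtain ⟨h1, h0, h2, h3⟩ := hp
  funext j
  have e : (Finset.univ.filter fun i : Fin m =>
      i < j ∧ psi n k p i + psi n k p j ≤ 2 * (k : ℤ) + ((j : ℕ) : ℤ) - ((i : ℕ) : ℤ)) =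
      dS n p j := by
    ext x
    rw [mem_dS]
    simp only [Finset.mem_filter, Finset.mem_univ, true_and]
    exact and_congr_right fun h => bwd_pair h1 h3 h
  unfold phiMap
  rw [e]
  unfold psi
  omega

lemma fwd_mem {l : Fin m → ℤ} (hm : 0 < m) (hk : n = m + k) (hl : l ∈ kStrictSet m n k hm) :
    phiMap m n k l ∈ indexSet m n := by
  obtain ⟨h1, h2, h3, h4⟩ := hl
  refine ⟨fwd_mono h1 h4, ?_, ?_, ?_⟩
  · intro j
    have : l j ≤ l ⟨0, hm⟩ := h1 (by simp [Fin.le_def])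
    unfold phiMap
    omega
  · intro j
    have : (Finset.univ.filter fun i : Fin m =>
      i < j ∧ l i + l j ≤ 2 * (k : ℤ) + ((j : ℕ) : ℤ) - ((i : ℕ) : ℤ)).card ≤
        (Finset.Iio j).card := by
      apply Finset.card_le_card
      intro x hx
      simp only [Finset.mem_Iio, Finset.mem_filter, Finset.mem_univ, true_and] at *
      exact hx.1
    rw [Fin.card_Iio] at this
    have := h2 j
    unfold phiMap
    omega
  · have key : ∀ i j : Fin m, i < j → phiMap m n k l i + phiMap m n k l j ≠ 2 * (n : ℤ) + 1 := by
      intro i j hij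
      have := fwd_pair (n := n) h1 h4 hij
      by_cases h : cC k l i j
      · have := this.1 h; omega
      · have := this.2 h; omega
    intro i j
    rcases lt_trichotomy i j with h | h | h
    · exact key i j h
    · subst h; omega
    · rw [add_comm]; exact key j i h

lemma fwd_inv {l : Fin m → ℤ} (hm : 0 < m) (hl : l ∈ kStrictSet m n k hm) :
    psi n k (phiMap m n k l) = l := by
  obtain ⟨h1, h2, h3, h4⟩ := hl
  funext j
  have e : (Finset.univ.filter fun i : Fin m =>
      i < j ∧ l i + l j ≤ 2 * (k : ℤ) + ((j : ℕ) : ℤ) - ((i : ℕ) : ℤ)) =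
      dS n (phiMap m n k l) j := by
    ext x
    rw [mem_dS]
    simp only [Finset.mem_filter, Finset.mem_univ, true_and]
    refine and_congr_right fun h => ?_
    have := fwd_pair (n := n) h1 h4 h
    refine ⟨this.1, fun h' => ?_⟩
    by_contra hc
    have := this.2 hc
    omega
  unfold psi
  rw [← e]
  unfold phiMap
  omega
end bwd

/-- For `2 ≤ m ≤ n` and `k = n − m`, the map `λ ↦ P` with
`p_j = n + k + 1 − λ_j + #{i < j : λ_i + λ_j ≤ 2k + j − i}` is a bijection from `k`-strict
partitions `(λ₁ ≥ … ≥ λ_m ≥ 0)` with `λ₁ ≤ 2n − m` onto index sets, with inverse given by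
`λ_j = n + k + 1 − p_j + #{i < j : p_i + p_j > 2n + 1}`. -/
theorem stmt_14 (m n k : ℕ) (hm : 2 ≤ m) (hmn : m ≤ n) (hk : k = n - m) :
    Set.BijOn (phiMap m n k) (kStrictSet m n k (by omega)) (indexSet m n) ∧
    ∀ l ∈ kStrictSet m n k (by omega : 0 < m), ∀ j : Fin m,
      l j = (n : ℤ) + k + 1 - phiMap m n k l j +
        ((Finset.univ.filter fun i : Fin m =>
          i < j ∧ phiMap m n k l i + phiMap m n k l j > 2 * (n : ℤ) + 1).card : ℤ) := by
  have hk' : n = m + k := by omega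
  have hm' : 0 < m := by omega
  refine ⟨⟨fun l hl => fwd_mem hm' hk' hl, ?_, ?_⟩, ?_⟩
  · intro l hl l' hl' h
    rw [← fwd_inv hm' hl, ← fwd_inv hm' hl', h]
  · intro p hp
    exact ⟨psi n k p, bwd_mem hm' hk' hp, bwd_inv hp⟩
  · intro l hl j
    exact (congrFun (fwd_inv hm' hl) j).symm
end

section
/- Let n ≥ 2. The quotient ring ℤ[a₁,a₂]/(δ'_{2n−1}, δ_{2n}) is a free ℤ-module of rank 2n(n−1). -/
open MvPolynomial in
theorem delta_rec (r : ℕ) : delta (r + 2) = X 0 * delta (r + 1) - X 1 * delta r := by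
  have hM' : ∀ M : Matrix (Fin (r+1)) (Fin (r+1)) (MvPolynomial (Fin 2) ℤ),
      (∀ j, M 0 j = if j = 0 then X 1 else 0) →
      (∀ i j : Fin r, M i.succ j.succ = aseq2 (1 + ((j : ℕ) : ℤ) - ((i : ℕ) : ℤ))) →
      M.det = X 1 * delta r := by
    intro M h0 hs
    rw [Matrix.det_succ_row_zero, Finset.sum_eq_single 0]
    · simp only [h0, delta]
      simp only [Fin.val_zero, pow_zero, one_mul, if_true]
      congr 2
      apply Matrix.ext
      intro i j
      simp [hs]
    · intro j _ hj
      simp [h0, hj]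
    · simp
  unfold delta
  rw [Matrix.det_succ_column_zero, Fin.sum_univ_succ, Fin.sum_univ_succ, Finset.sum_eq_zero]
  · rw [hM' (Matrix.submatrix _ (Fin.succ (0 : Fin (r+1))).succAbove Fin.succ)]
    · have : (Matrix.of fun i j : Fin (r+2) => aseq2 (1 + ((j : ℕ) : ℤ) - ((i : ℕ) : ℤ))).submatrix
        (Fin.succAbove 0) Fin.succ = (Matrix.of fun i j : Fin (r+1) => aseq2 (1 + ((j : ℕ) : ℤ) - ((i : ℕ) : ℤ))) := by
        apply Matrix.ext
        intro i j
        simp only [Matrix.submatrix_apply, Matrix.of_apply, Fin.zero_succAbove]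
        congr 1
        simp only [Fin.val_succ]; push_cast; ring
      rw [this]
      simp [aseq2, delta]
      ring
    · intro j
      have : (Fin.succ (0 : Fin (r+1))).succAbove 0 = 0 := by simp
      simp only [Matrix.submatrix_apply, this, Matrix.of_apply, aseq2]
      rcases Fin.eq_zero_or_eq_succ j with rfl | ⟨j, rfl⟩
      · simp
      · simp [Fin.val_succ, Fin.succ_ne_zero]
        split_ifs <;> first | omega | rfl
    · intro i j
      have : (Fin.succ (0 : Fin (r+1))).succAbove i.succ = i.succ.succ := by
        rw [Fin.succ_succAbove_succ]; simp
      simp only [Matrix.submatrix_apply, this, Matrix.of_apply]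
      congr 1
      simp only [Fin.val_succ]; push_cast; ring
  · intro i _
    have : aseq2 (1 + (((0 : Fin (r+2)) : ℕ) : ℤ) - ((i.succ.succ : ℕ) : ℤ)) = 0 := by
      simp only [aseq2, Fin.val_succ, Fin.val_zero]; push_cast
      split_ifs <;> first | omega | rfl
    simp only [Matrix.of_apply, this]; simp

open MvPolynomial in
/-- quotient by `(X0^m, X1)` -/
noncomputable def quotEquiv (m : ℕ) :
    (MvPolynomial (Fin 2) ℤ ⧸ Ideal.span {(X 0 : MvPolynomial (Fin 2) ℤ) ^ m, X 1}) ≃ₐ[ℤ]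
      AdjoinRoot (Polynomial.X ^ m : Polynomial ℤ) := by
  have H : Polynomial.eval₂ (↑(Algebra.ofId ℤ (MvPolynomial (Fin 2) ℤ ⧸
      Ideal.span {(X 0 : MvPolynomial (Fin 2) ℤ) ^ m, X 1})) : ℤ →+* _)
      ((Ideal.Quotient.mk (Ideal.span {(X 0 : MvPolynomial (Fin 2) ℤ) ^ m, X 1})) (X 0))
      (Polynomial.X ^ m) = 0 := by
    rw [Polynomial.eval₂_pow, Polynomial.eval₂_X, ← map_pow, Ideal.Quotient.eq_zero_iff_mem]
    exact Ideal.subset_span (by simp)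
  refine AlgEquiv.ofAlgHom
    (Ideal.Quotient.liftₐ _ (aeval ![AdjoinRoot.root _, 0]) ?_)
    (AdjoinRoot.liftAlgHom _ (Algebra.ofId _ _) (Ideal.Quotient.mk _ (X 0)) H) ?_ ?_
  · intro a ha
    have : Ideal.span {(X 0 : MvPolynomial (Fin 2) ℤ) ^ m, X 1} ≤
        RingHom.ker (aeval ![AdjoinRoot.root (Polynomial.X ^ m : Polynomial ℤ), 0] :
          MvPolynomial (Fin 2) ℤ →ₐ[ℤ] _) := by
      rw [Ideal.span_le]
      rintro x (rfl | rfl)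
      · have := AdjoinRoot.mk_self (f := (Polynomial.X ^ m : Polynomial ℤ))
        rw [map_pow, AdjoinRoot.mk_X] at this
        simp only [SetLike.mem_coe, RingHom.mem_ker, map_pow, aeval_X]
        exact this
      · simp [RingHom.mem_ker]
    exact this ha
  · apply AdjoinRoot.algHom_ext
    rw [AlgHom.comp_apply, AdjoinRoot.liftAlgHom_root]
    change (aeval ![AdjoinRoot.root (Polynomial.X ^ m : Polynomial ℤ), 0] :
      MvPolynomial (Fin 2) ℤ →ₐ[ℤ] _) (X 0) = _
    simp
  · apply Ideal.Quotient.algHom_ext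
    apply MvPolynomial.algHom_ext
    intro i
    change AdjoinRoot.liftAlgHom _ _ _ H ((aeval ![AdjoinRoot.root (Polynomial.X ^ m : Polynomial ℤ), 0] :
      MvPolynomial (Fin 2) ℤ →ₐ[ℤ] _) (X i)) = Ideal.Quotient.mk _ (X i)
    rw [aeval_X]
    fin_cases i
    · exact AdjoinRoot.liftAlgHom_root ..
    · change AdjoinRoot.liftAlgHom _ _ _ H 0 = Ideal.Quotient.mk _ (X 1)
      rw [map_zero]
      symm
      rw [Ideal.Quotient.eq_zero_iff_mem]
      exact Ideal.subset_span (by simp)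

/-- free of finite rank `r` -/
def FreeRk (M : Type) [AddCommGroup M] (r : ℕ) : Prop :=
  Module.Free ℤ M ∧ Module.Finite ℤ M ∧ Module.finrank ℤ M = r

theorem FreeRk.ses {A B C : Type} [AddCommGroup A] [AddCommGroup B] [AddCommGroup C] {r s : ℕ}
    (hA : FreeRk A r) (hC : FreeRk C s) (f : A →ₗ[ℤ] B) (g : B →ₗ[ℤ] C)
    (hf : Function.Injective f) (hg : Function.Surjective g) (h : Function.Exact f g) :
    FreeRk B (r + s) := by
  obtain ⟨a1, a2, a3⟩ := hA
  obtain ⟨c1, c2, c3⟩ := hC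
  obtain ⟨l, hl⟩ := Module.projective_lifting_property g LinearMap.id hg
  have e : B ≃ₗ[ℤ] A × C := (h.splitSurjectiveEquiv hf ⟨l, hl⟩).1
  refine ⟨Module.Free.of_equiv e.symm, Module.Finite.equiv e.symm, ?_⟩
  rw [e.finrank_eq, Module.finrank_prod, a3, c3]

theorem FreeRk.pow (m : ℕ) : FreeRk (MvPolynomial (Fin 2) ℤ ⧸
    Ideal.span {(MvPolynomial.X 0 : MvPolynomial (Fin 2) ℤ) ^ m, MvPolynomial.X 1}) m := by
  have hm : (Polynomial.X ^ m : Polynomial ℤ).Monic := Polynomial.monic_X_pow m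
  have e := (quotEquiv m).toLinearEquiv
  have pb := AdjoinRoot.powerBasis' hm
  haveI : Module.Free ℤ (AdjoinRoot (Polynomial.X ^ m : Polynomial ℤ)) := hm.free_adjoinRoot
  haveI : Module.Finite ℤ (AdjoinRoot (Polynomial.X ^ m : Polynomial ℤ)) := hm.finite_adjoinRoot
  refine ⟨Module.Free.of_equiv e.symm, Module.Finite.equiv e.symm, ?_⟩
  rw [e.finrank_eq, (AdjoinRoot.powerBasis' hm).finrank, AdjoinRoot.powerBasis'_dim]
  simp

open MvPolynomial in
theorem FreeRk.step (m r : ℕ) (f y : MvPolynomial (Fin 2) ℤ) (hf : X 1 ∣ f - X 0 ^ m)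
    (h : FreeRk (MvPolynomial (Fin 2) ℤ ⧸ Ideal.span {f, y}) r) :
    FreeRk (MvPolynomial (Fin 2) ℤ ⧸ Ideal.span {f, X 1 * y}) (r + m) := by
  have hp : Prime (X 1 : MvPolynomial (Fin 2) ℤ) := MvPolynomial.X_prime
  have hnd : ¬ (X 1 : MvPolynomial (Fin 2) ℤ) ∣ f := by
    intro h1
    have h2 : (X 1 : MvPolynomial (Fin 2) ℤ) ∣ X 0 ^ m := by
      have := dvd_sub h1 hf
      simpa using this
    have h3 := hp.dvd_of_dvd_pow h2
    obtain ⟨c, hc⟩ := h3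
    have := congrArg (aeval (![1, 0] : Fin 2 → ℤ)) hc
    simp at this
  have hspan : Ideal.span {f, X 1} = Ideal.span {(X 0 : MvPolynomial (Fin 2) ℤ) ^ m, X 1} := by
    obtain ⟨c, hc⟩ := hf
    have : f = X 0 ^ m + X 1 * c := by rw [← hc]; ring
    rw [this]
    apply le_antisymm <;> rw [Ideal.span_le] <;> rintro x (rfl | rfl) <;>
      simp only [SetLike.mem_coe, Ideal.mem_span_pair]
    · exact ⟨1, c, by ring⟩
    · exact ⟨0, 1, by ring⟩
    · exact ⟨1, -c, by ring⟩
    · exact ⟨0, 1, by ring⟩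
  have hC : FreeRk (MvPolynomial (Fin 2) ℤ ⧸ Ideal.span {f, X 1}) m := by
    rw [hspan]; exact FreeRk.pow m
  have hle : Ideal.span {f, X 1 * y} ≤ Ideal.span {f, X 1} := by
    rw [Ideal.span_le]; rintro x (rfl | rfl) <;>
      simp only [SetLike.mem_coe, Ideal.mem_span_pair]
    · exact ⟨1, 0, by ring⟩
    · exact ⟨0, y, by ring⟩
  let φ : (MvPolynomial (Fin 2) ℤ ⧸ Ideal.span {f, y}) →ₗ[MvPolynomial (Fin 2) ℤ]
      (MvPolynomial (Fin 2) ℤ ⧸ Ideal.span {f, X 1 * y}) :=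
    Submodule.mapQ _ _ (LinearMap.mulLeft (MvPolynomial (Fin 2) ℤ) (X 1)) (by
      intro u hu
      rw [Ideal.mem_span_pair] at hu
      obtain ⟨a, b, rfl⟩ := hu
      show _ ∈ Ideal.span _
      rw [Ideal.mem_span_pair]
      exact ⟨X 1 * a, b, by simp; ring⟩)
  let ψ : (MvPolynomial (Fin 2) ℤ ⧸ Ideal.span {f, X 1 * y}) →ₗ[MvPolynomial (Fin 2) ℤ]
      (MvPolynomial (Fin 2) ℤ ⧸ Ideal.span {f, X 1}) :=
    Submodule.mapQ _ _ LinearMap.id hle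
  have hφ : ∀ u, φ (Ideal.Quotient.mk _ u) = Ideal.Quotient.mk _ (X 1 * u) := fun u => rfl
  have hψ : ∀ u, ψ (Ideal.Quotient.mk _ u) = Ideal.Quotient.mk _ u := fun u => rfl
  refine FreeRk.ses h hC (φ.restrictScalars ℤ) (ψ.restrictScalars ℤ) ?_ ?_ ?_
  · rw [injective_iff_map_eq_zero]
    intro a ha
    obtain ⟨u, rfl⟩ := Ideal.Quotient.mk_surjective a
    change φ _ = 0 at ha
    rw [hφ, Ideal.Quotient.eq_zero_iff_mem, Ideal.mem_span_pair] at ha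
    obtain ⟨a, b, hab⟩ := ha
    have h1 : (X 1 : MvPolynomial (Fin 2) ℤ) ∣ a * f := ⟨u - b * y, by linear_combination hab⟩
    obtain ⟨c, rfl⟩ := (hp.dvd_or_dvd h1).resolve_right hnd
    rw [Ideal.Quotient.eq_zero_iff_mem, Ideal.mem_span_pair]
    exact ⟨c, b, mul_left_cancel₀ hp.ne_zero (by linear_combination hab)⟩
  · intro a
    obtain ⟨u, rfl⟩ := Ideal.Quotient.mk_surjective a
    exact ⟨Ideal.Quotient.mk _ u, rfl⟩
  · intro b
    obtain ⟨u, rfl⟩ := Ideal.Quotient.mk_surjective b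
    change ψ _ = 0 ↔ _
    rw [hψ, Ideal.Quotient.eq_zero_iff_mem, Ideal.mem_span_pair]
    constructor
    · rintro ⟨a, b, rfl⟩
      refine ⟨Ideal.Quotient.mk _ b, ?_⟩
      change φ _ = _
      rw [hφ, Ideal.Quotient.eq, Ideal.mem_span_pair]
      exact ⟨-a, 0, by ring⟩
    · rintro ⟨v, hv⟩
      obtain ⟨v, rfl⟩ := Ideal.Quotient.mk_surjective v
      change φ _ = _ at hv
      rw [hφ, Ideal.Quotient.eq, Ideal.mem_span_pair] at hv
      obtain ⟨a, b, hab⟩ := hv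
      exact ⟨-a, v - b * y, by linear_combination -hab⟩

/-- the quotients `δ'_{2k+1}` -/
noncomputable def dprime : ℕ → MvPolynomial (Fin 2) ℤ
  | 0 => 1
  | k + 1 => delta (2 * k + 2) - MvPolynomial.X 1 * dprime k

open MvPolynomial in
theorem X_mul_dprime (k : ℕ) : X 0 * dprime k = delta (2 * k + 1) := by
  induction k with
  | zero => simp [dprime, delta, aseq2]
  | succ k ih =>
    have : delta (2 * (k + 1) + 1) = _ := delta_rec (2 * k + 1)
    rw [this, dprime, ← ih]
    ring

open MvPolynomial in
theorem delta_even (k : ℕ) :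
    delta (2 * k + 4) = X 0 ^ 2 * dprime (k + 1) - X 1 * delta (2 * k + 2) := by
  have : delta (2 * k + 4) = _ := delta_rec (2 * k + 2)
  rw [this]
  have h2 := X_mul_dprime (k + 1)
  have : 2 * (k + 1) + 1 = 2 * k + 2 + 1 := by ring
  rw [this] at h2
  rw [← h2]; ring

open MvPolynomial in
theorem delta_mod (r : ℕ) : (X 1 : MvPolynomial (Fin 2) ℤ) ∣ delta r - X 0 ^ r := by
  induction r with
  | zero => simp [delta]
  | succ r ih =>
    cases r with
    | zero => simp [delta, aseq2]
    | succ r =>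
      obtain ⟨c, hc⟩ := ih
      exact ⟨X 0 * c - delta r, by rw [delta_rec]; linear_combination X 0 * hc⟩

open MvPolynomial in
theorem dprime_mod (k : ℕ) : (X 1 : MvPolynomial (Fin 2) ℤ) ∣ dprime (k + 1) - X 0 ^ (2 * k + 2) := by
  obtain ⟨c, hc⟩ := delta_mod (2 * k + 2)
  exact ⟨c - dprime k, by rw [dprime]; linear_combination hc⟩

open MvPolynomial in
theorem freeRk_main (k : ℕ) :
    FreeRk (MvPolynomial (Fin 2) ℤ ⧸ Ideal.span {dprime k, delta (2 * k + 2)})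
      (2 * (k + 1) * k) := by
  induction k with
  | zero =>
    have : Ideal.span {dprime 0, delta (2 * 0 + 2)} = ⊤ := by
      rw [Ideal.eq_top_iff_one]
      exact Ideal.subset_span (by simp [dprime])
    rw [this]
    haveI : Subsingleton (MvPolynomial (Fin 2) ℤ ⧸ (⊤ : Ideal (MvPolynomial (Fin 2) ℤ))) :=
      Ideal.Quotient.subsingleton_iff.2 rfl
    exact ⟨inferInstance, inferInstance, by simp [Module.finrank_zero_of_subsingleton]⟩
  | succ k ih =>
    rw [Set.pair_comm] at ih
    have h1 := FreeRk.step (2 * k + 2) _ _ _ (delta_mod (2 * k + 2)) ih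
    have e1 : Ideal.span {delta (2 * k + 2), X 1 * dprime k} =
        Ideal.span {dprime (k + 1), delta (2 * k + 2)} := by
      apply le_antisymm <;> rw [Ideal.span_le] <;> rintro x (rfl | rfl) <;>
        simp only [SetLike.mem_coe, Ideal.mem_span_pair, dprime]
      · exact ⟨0, 1, by ring⟩
      · exact ⟨-1, 1, by ring⟩
      · exact ⟨1, -1, by ring⟩
      · exact ⟨1, 0, by ring⟩
    rw [e1] at h1
    have h2 := FreeRk.step (2 * k + 2) _ _ _ (dprime_mod k) h1
    have e2 : Ideal.span {dprime (k + 1), X 1 * delta (2 * k + 2)} =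
        Ideal.span {dprime (k + 1), delta (2 * (k + 1) + 2)} := by
      have : delta (2 * (k + 1) + 2) = _ := delta_even k
      rw [this]
      apply le_antisymm <;> rw [Ideal.span_le] <;> rintro x (rfl | rfl) <;>
        simp only [SetLike.mem_coe, Ideal.mem_span_pair]
      · exact ⟨1, 0, by ring⟩
      · exact ⟨X 0 ^ 2, -1, by ring⟩
      · exact ⟨1, 0, by ring⟩
      · exact ⟨X 0 ^ 2, -1, by ring⟩
    rw [e2] at h2
    convert h2 using 1
    ring


/-- For `n ≥ 2`, the quotient `ℤ[a₁,a₂]/(δ'_{2n−1}, δ_{2n})`, where `δ'_{2n−1} = δ_{2n−1}/a₁`,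
is a free `ℤ`-module of rank `2n(n−1)`. -/
theorem stmt_17 (n : ℕ) (hn : 2 ≤ n) (δ' : MvPolynomial (Fin 2) ℤ)
    (hδ' : MvPolynomial.X 0 * δ' = delta (2 * n - 1)) :
    Module.Free ℤ (MvPolynomial (Fin 2) ℤ ⧸ Ideal.span {δ', delta (2 * n)}) ∧
    Module.finrank ℤ (MvPolynomial (Fin 2) ℤ ⧸ Ideal.span {δ', delta (2 * n)})
      = 2 * n * (n - 1) := by
  obtain ⟨k, rfl⟩ : ∃ k, n = k + 1 := ⟨n - 1, by omega⟩
  have e1 : 2 * (k + 1) - 1 = 2 * k + 1 := by omega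
  rw [e1, ← X_mul_dprime k] at hδ'
  have := mul_left_cancel₀ (MvPolynomial.X_ne_zero 0) hδ'
  subst this
  obtain ⟨h1, -, h3⟩ := freeRk_main k
  exact ⟨h1, h3⟩
end

section
/- Let n ≥ 2. The quotient ring ℤ[a₁,a₂]/(δ_{2n}, δ'_{2n+1}) is a free ℤ-module of rank 2n². -/
/-- the pair of polynomials -/
noncomputable def PQ : ℕ → MvPolynomial (Fin 2) ℤ × MvPolynomial (Fin 2) ℤ
  | 0 => (1, 1)
  | n + 1 =>
    (MvPolynomial.X 0 ^ 2 * (PQ n).2 - MvPolynomial.X 1 * (PQ n).1,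
     (MvPolynomial.X 0 ^ 2 * (PQ n).2 - MvPolynomial.X 1 * (PQ n).1)
        - MvPolynomial.X 1 * (PQ n).2)

theorem delta_PQ (n : ℕ) : delta (2 * n) = (PQ n).1 ∧
    delta (2 * n + 1) = MvPolynomial.X 0 * (PQ n).2 := by
  induction n with
  | zero =>
    constructor
    · simp [delta, PQ]
    · simp [delta, PQ, aseq2]
  | succ n ih =>
    obtain ⟨h1, h2⟩ := ih
    have e1 : delta (2 * (n + 1)) = (PQ (n + 1)).1 := by
      rw [show 2 * (n + 1) = 2 * n + 2 by ring, delta_rec, h1, h2]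
      simp only [PQ]
      ring
    refine ⟨e1, ?_⟩
    rw [show 2 * (n + 1) + 1 = (2 * n + 1) + 2 by ring, delta_rec, h2,
      show 2 * n + 1 + 1 = 2 * (n + 1) by ring, e1]
    simp only [PQ]
    ring

/-- evaluation at y = 0 -/
noncomputable def ev : MvPolynomial (Fin 2) ℤ →ₐ[ℤ] Polynomial ℤ :=
  MvPolynomial.aeval ![Polynomial.X, 0]

/-- section of ev -/
noncomputable def sec : Polynomial ℤ →ₐ[ℤ] MvPolynomial (Fin 2) ℤ :=
  Polynomial.aeval (MvPolynomial.X 0)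

theorem ev_sec (p : Polynomial ℤ) : ev (sec p) = p := by
  have : ev.comp sec = AlgHom.id ℤ _ := by
    ext
    simp [ev, sec]
  exact DFunLike.congr_fun this p

theorem ev_X0 : ev (MvPolynomial.X 0) = Polynomial.X := by simp [ev]
theorem ev_X1 : ev (MvPolynomial.X 1) = 0 := by simp [ev]

theorem sub_sec_ev (f : MvPolynomial (Fin 2) ℤ) :
    ∃ g, f - sec (ev f) = MvPolynomial.X 1 * g := by
  have h : (Ideal.Quotient.mkₐ ℤ (Ideal.span {(MvPolynomial.X 1 : MvPolynomial (Fin 2) ℤ)})) =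
      (Ideal.Quotient.mkₐ ℤ (Ideal.span {(MvPolynomial.X 1 : MvPolynomial (Fin 2) ℤ)})).comp
        (sec.comp ev) := by
    apply MvPolynomial.algHom_ext
    intro i
    fin_cases i
    · simp [ev, sec]
    · simp [ev, sec, Ideal.Quotient.eq_zero_iff_mem, Ideal.mem_span_singleton]
  have := DFunLike.congr_fun h f
  simp only [AlgHom.comp_apply, Ideal.Quotient.mkₐ_eq_mk] at this
  rw [Ideal.Quotient.eq, Ideal.mem_span_singleton] at this
  exact this

theorem ev_eq_zero (f : MvPolynomial (Fin 2) ℤ) (h : ev f = 0) :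
    ∃ g, f = MvPolynomial.X 1 * g := by
  obtain ⟨g, hg⟩ := sub_sec_ev f
  exact ⟨g, by simpa [h] using hg⟩

/-- quotient is free of rank m -/
def Good (A B : MvPolynomial (Fin 2) ℤ) (m : ℕ) : Prop :=
  Nonempty ((MvPolynomial (Fin 2) ℤ ⧸ Ideal.span {A, B}) ≃ₗ[ℤ] (Fin m → ℤ))

theorem Good.step {A B : MvPolynomial (Fin 2) ℤ} {m k : ℕ} (h : Good A B m)
    (hA : ev A = Polynomial.X ^ k) : Good A (MvPolynomial.X 1 * B) (m + k) := by
  obtain ⟨e⟩ := h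
  let pb := AdjoinRoot.powerBasis' (Polynomial.monic_X_pow (R := ℤ) k)
  have hdim : pb.dim = k := by simp [pb]
  let J := Ideal.span {A, MvPolynomial.X 1 * B}
  let I := Ideal.span {A, B}
  let g0 : (MvPolynomial (Fin 2) ℤ ⧸ J) →+* AdjoinRoot ((Polynomial.X : Polynomial ℤ) ^ k) :=
    Ideal.Quotient.lift J ((AdjoinRoot.mk _).comp (ev : MvPolynomial (Fin 2) ℤ →+* Polynomial ℤ))
      (by
        intro a ha
        obtain ⟨c, d, rfl⟩ := Ideal.mem_span_pair.1 ha
        simp [hA, ev_X1])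
  let g : (MvPolynomial (Fin 2) ℤ ⧸ J) →ₗ[ℤ] AdjoinRoot ((Polynomial.X : Polynomial ℤ) ^ k) :=
    g0.toIntAlgHom.toLinearMap
  have hgmk : ∀ a, g (Ideal.Quotient.mk J a) = AdjoinRoot.mk _ (ev a) := fun a => rfl
  let f1 : (MvPolynomial (Fin 2) ℤ ⧸ I) →ₗ[MvPolynomial (Fin 2) ℤ] (MvPolynomial (Fin 2) ℤ ⧸ J) :=
    Submodule.mapQ I J (LinearMap.mulLeft _ (MvPolynomial.X 1)) (by
      intro a ha
      obtain ⟨c, d, rfl⟩ := Ideal.mem_span_pair.1 ha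
      refine Ideal.mem_span_pair.2 ⟨MvPolynomial.X 1 * c, d, ?_⟩
      simp only [LinearMap.mulLeft_apply]
      ring)
  let f : (MvPolynomial (Fin 2) ℤ ⧸ I) →ₗ[ℤ] (MvPolynomial (Fin 2) ℤ ⧸ J) :=
    f1.toAddMonoidHom.toIntLinearMap
  have hfmk : ∀ a, f (Ideal.Quotient.mk I a) = Ideal.Quotient.mk J (MvPolynomial.X 1 * a) :=
    fun a => rfl
  have hf : Function.Injective f := by
    rw [injective_iff_map_eq_zero]
    intro a ha
    obtain ⟨a, rfl⟩ := Ideal.Quotient.mk_surjective a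
    rw [hfmk, Ideal.Quotient.eq_zero_iff_mem] at ha
    obtain ⟨c, d, hcd⟩ := Ideal.mem_span_pair.1 ha
    have hc : ev c = 0 := by
      have := congrArg ev hcd
      simpa [ev_X1, hA] using this
    obtain ⟨c', rfl⟩ := ev_eq_zero c hc
    rw [Ideal.Quotient.eq_zero_iff_mem]
    refine Ideal.mem_span_pair.2 ⟨c', d, ?_⟩
    apply mul_left_cancel₀ (MvPolynomial.X_ne_zero (R := ℤ) (1 : Fin 2))
    rw [← hcd]
    ring
  have hg : Function.Surjective g := by
    intro z
    obtain ⟨p, rfl⟩ := AdjoinRoot.mk_surjective z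
    exact ⟨Ideal.Quotient.mk J (sec p), by rw [hgmk, ev_sec]⟩
  have hex : Function.Exact f g := by
    intro z
    obtain ⟨a, rfl⟩ := Ideal.Quotient.mk_surjective z
    constructor
    · intro hz
      rw [hgmk, AdjoinRoot.mk_eq_zero] at hz
      obtain ⟨p, hp⟩ := hz
      obtain ⟨q, hq⟩ := ev_eq_zero (a - A * sec p) (by rw [map_sub, map_mul, ev_sec, hA, hp, sub_self])
      refine ⟨Ideal.Quotient.mk I q, ?_⟩
      rw [hfmk, Ideal.Quotient.eq, ← hq]
      exact Ideal.mem_span_pair.2 ⟨-sec p, 0, by ring⟩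
    · rintro ⟨b, hb⟩
      obtain ⟨b, rfl⟩ := Ideal.Quotient.mk_surjective b
      rw [← hb, hfmk, hgmk]
      simp [ev_X1]
  have : Module.Free ℤ (AdjoinRoot ((Polynomial.X : Polynomial ℤ) ^ k)) :=
    Module.Free.of_basis pb.basis
  obtain ⟨l, hl⟩ := Module.projective_lifting_property g LinearMap.id hg
  let e2 := (hex.splitSurjectiveEquiv hf ⟨l, hl⟩).1
  let e3 : AdjoinRoot ((Polynomial.X : Polynomial ℤ) ^ k) ≃ₗ[ℤ] (Fin k → ℤ) :=
    (pb.basis.reindex (finCongr hdim)).equivFun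
  exact ⟨e2 ≪≫ₗ (LinearEquiv.prodCongr e e3) ≪≫ₗ
    (LinearEquiv.sumArrowLequivProdArrow (Fin m) (Fin k) ℤ ℤ).symm ≪≫ₗ
    LinearEquiv.funCongrLeft ℤ ℤ finSumFinEquiv.symm⟩

theorem ev_PQ (n : ℕ) : ev (PQ n).1 = Polynomial.X ^ (2 * n) ∧
    ev (PQ n).2 = Polynomial.X ^ (2 * n) := by
  induction n with
  | zero => simp [PQ]
  | succ n ih =>
    constructor <;> simp only [PQ, map_sub, map_mul, map_pow, ev_X0, ev_X1, ih.1, ih.2] <;> ring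

theorem Good.congr {A B A' B' : MvPolynomial (Fin 2) ℤ} {m m' : ℕ} (h : Good A B m)
    (hI : Ideal.span {A, B} = Ideal.span {A', B'}) (hm : m = m') : Good A' B' m' := by
  subst hm
  unfold Good at *
  rwa [← hI]

theorem good_PQ (n : ℕ) : Good (PQ n).1 (PQ n).2 (2 * n ^ 2) := by
  induction n with
  | zero =>
    have : Subsingleton (MvPolynomial (Fin 2) ℤ ⧸ Ideal.span {(PQ 0).1, (PQ 0).2}) := by
      rw [Ideal.Quotient.subsingleton_iff]
      simp [PQ]
    refine ⟨?_⟩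
    exact LinearEquiv.ofSubsingleton _ (Fin 0 → ℤ)
  | succ n ih =>
    have h1 : Good (PQ n).2 (PQ n).1 (2 * n ^ 2) := ih.congr (by rw [Set.pair_comm]) rfl
    have h2 := h1.step (ev_PQ n).2
    have h3 : Good (PQ (n+1)).1 (PQ n).2 (2 * n ^ 2 + 2 * n) := by
      refine h2.congr ?_ rfl
      apply le_antisymm
      · rw [Ideal.span_le, Set.pair_subset_iff]
        simp only [PQ]
        exact ⟨Ideal.mem_span_pair.2 ⟨0, 1, by ring⟩,
          Ideal.mem_span_pair.2 ⟨-1, MvPolynomial.X 0 ^ 2, by ring⟩⟩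
      · rw [Ideal.span_le, Set.pair_subset_iff]
        simp only [PQ]
        exact ⟨Ideal.mem_span_pair.2 ⟨MvPolynomial.X 0 ^ 2, -1, by ring⟩,
          Ideal.mem_span_pair.2 ⟨1, 0, by ring⟩⟩
    refine (h3.step (ev_PQ (n+1)).1).congr ?_ (by ring)
    apply le_antisymm
    · rw [Ideal.span_le, Set.pair_subset_iff]
      exact ⟨Ideal.mem_span_pair.2 ⟨1, 0, by ring⟩,
        Ideal.mem_span_pair.2 ⟨1, -1, by simp only [PQ]; ring⟩⟩
    · rw [Ideal.span_le, Set.pair_subset_iff]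
      exact ⟨Ideal.mem_span_pair.2 ⟨1, 0, by ring⟩,
        Ideal.mem_span_pair.2 ⟨1, -1, by simp only [PQ]; ring⟩⟩

/-- For `n ≥ 2`, the quotient `ℤ[a₁,a₂]/(δ_{2n}, δ'_{2n+1})`, where `δ'_{2n+1} = δ_{2n+1}/a₁`,
is a free `ℤ`-module of rank `2n²`. -/
theorem stmt_18 (n : ℕ) (hn : 2 ≤ n) (δ' : MvPolynomial (Fin 2) ℤ)
    (hδ' : MvPolynomial.X 0 * δ' = delta (2 * n + 1)) :
    Module.Free ℤ (MvPolynomial (Fin 2) ℤ ⧸ Ideal.span {delta (2 * n), δ'}) ∧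
    Module.finrank ℤ (MvPolynomial (Fin 2) ℤ ⧸ Ideal.span {delta (2 * n), δ'})
      = 2 * n ^ 2 := by
  obtain ⟨h1, h2⟩ := delta_PQ n
  rw [h2] at hδ'
  have h3 := mul_left_cancel₀ (MvPolynomial.X_ne_zero (R := ℤ) (0 : Fin 2)) hδ'
  rw [h1, h3]
  obtain ⟨e⟩ := good_PQ n
  exact ⟨Module.Free.of_equiv e.symm, by rw [e.finrank_eq]; simp⟩
end

section
/- Let n ≥ 2, let V be a (2n+1)-dimensional ℂ-vector space, and let ω be an alternating bilinear form on V of rank 2n. Let F_• = (F₀ ⊂ F₁ ⊂ ⋯ ⊂ F_{2n+1} = V) and G_• be complete flags of V (dim F_p = p, dim G_q = q), and let 0 ≤ i ≤ 2n−2 be an integer. Denote by U^⊥ the ω-orthogonal of a subspace U. Assume: (i) dim(F_p ∩ G_q) = max(0, p + q − (2n+1)) for all 0 ≤ p, q ≤ 2n+1; (ii) dim(F_{2n+1−i} ∩ G_{i+3} ∩ F₁^⊥ ∩ G₁^⊥) = 1; (iii) F₁ ⊄ G₁^⊥; (iv) G₁ ⊄ F₁^⊥. Then there exists exactly one pair of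 subspaces (U₁, U₃) of V with dim U₁ = 1, dim U₃ = 3 and U₁ ⊆ U₃ ⊆ U₁^⊥, such that there exist 2-dimensional subspaces Σ and Σ' with U₁ ⊆ Σ ⊆ U₃, F₁ ⊆ Σ ⊆ F_{2n+1−i}, and U₁ ⊆ Σ' ⊆ U₃, G₁ ⊆ Σ' ⊆ G_{i+3}. Moreover this pair is given by U₁ = F_{2n+1−i} ∩ G_{i+3} ∩ F₁^⊥ ∩ G₁^⊥ and U₃ = U₁ ⊕ F₁ ⊕ G₁. -/
open Module

/-- The predicate on a pair `(U₁, U₃)` of subspaces of `V`: `dim U₁ = 1`, `dim U₃ = 3`,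
`U₁ ⊆ U₃ ⊆ U₁^⊥`, and there exist `2`-dimensional subspaces `Σ, Σ'` with
`U₁ ⊆ Σ ⊆ U₃`, `F₁ ⊆ Σ ⊆ F_{2n+1−i}` and `U₁ ⊆ Σ' ⊆ U₃`, `G₁ ⊆ Σ' ⊆ G_{i+3}`. -/
def linePred (n i : ℕ) {V : Type*} [AddCommGroup V] [Module ℂ V]
    (ω : V →ₗ[ℂ] V →ₗ[ℂ] ℂ) (F G : ℕ → Submodule ℂ V)
    (U : Submodule ℂ V × Submodule ℂ V) : Prop :=
  finrank ℂ U.1 = 1 ∧ finrank ℂ U.2 = 3 ∧ U.1 ≤ U.2 ∧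
    U.2 ≤ LinearMap.BilinForm.orthogonal ω U.1 ∧
    (∃ S : Submodule ℂ V, finrank ℂ S = 2 ∧ U.1 ≤ S ∧ S ≤ U.2 ∧
      F 1 ≤ S ∧ S ≤ F (2 * n + 1 - i)) ∧
    (∃ S : Submodule ℂ V, finrank ℂ S = 2 ∧ U.1 ≤ S ∧ S ≤ U.2 ∧
      G 1 ≤ S ∧ S ≤ G (i + 3))

theorem aux_inf {V : Type*} [AddCommGroup V] [Module ℂ V] [FiniteDimensional ℂ V]
    (A B : Submodule ℂ V) (hA : finrank ℂ A = 1) (h : ¬ A ≤ B) : B ⊓ A = ⊥ := by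
  by_contra hne
  apply h
  have h0 : finrank ℂ ↥(B ⊓ A) ≠ 0 := fun h0 => hne (Submodule.finrank_eq_zero.mp h0)
  have : B ⊓ A = A := Submodule.eq_of_le_of_finrank_le inf_le_right (by omega)
  exact inf_eq_right.mp this

theorem aux_self {V : Type*} [AddCommGroup V] [Module ℂ V]
    (ω : V →ₗ[ℂ] V →ₗ[ℂ] ℂ) (halt : ∀ v : V, ω v v = 0)
    (A : Submodule ℂ V) (hA : finrank ℂ A = 1) : A ≤ LinearMap.BilinForm.orthogonal ω A := by
  obtain ⟨v, -, hv⟩ := finrank_eq_one_iff'.mp hA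
  intro x hx y hy
  obtain ⟨a, ha⟩ := hv ⟨x, hx⟩
  obtain ⟨b, hb⟩ := hv ⟨y, hy⟩
  have ha' : x = a • (v : V) := by simpa using (congrArg Subtype.val ha).symm
  have hb' : y = b • (v : V) := by simpa using (congrArg Subtype.val hb).symm
  change ω y x = 0
  simp [ha', hb', halt]

theorem aux_symm {V : Type*} [AddCommGroup V] [Module ℂ V]
    (ω : V →ₗ[ℂ] V →ₗ[ℂ] ℂ) (halt : ∀ v : V, ω v v = 0)
    (A B : Submodule ℂ V) (h : A ≤ LinearMap.BilinForm.orthogonal ω B) :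
    B ≤ LinearMap.BilinForm.orthogonal ω A := by
  intro x hx y hy
  have h1 : ω x y = 0 := h hy x hx
  have h2 := halt (x + y)
  change ω y x = 0
  simpa [halt, h1] using h2

theorem aux_sup {V : Type*} [AddCommGroup V] [Module ℂ V] [FiniteDimensional ℂ V]
    (A B : Submodule ℂ V) (h : A ⊓ B = ⊥) :
    finrank ℂ ↥(A ⊔ B) = finrank ℂ A + finrank ℂ B := by
  have := Submodule.finrank_sup_add_finrank_inf_eq A B
  rw [h, finrank_bot] at this
  omega

/-- Let `n ≥ 2`, `V` a `(2n+1)`-dimensional `ℂ`-vector space, `ω` an alternating bilinear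
form on `V` of rank `2n`, `F_•`, `G_•` complete flags of `V` and `0 ≤ i ≤ 2n−2`. Under the
genericity conditions (i)–(iv), there is exactly one pair `(U₁, U₃)` with `dim U₁ = 1`,
`dim U₃ = 3`, `U₁ ⊆ U₃ ⊆ U₁^⊥` such that the corresponding line on `IG(2,2n+1)` meets
`{Σ : F₁ ⊂ Σ ⊂ F_{2n+1−i}}` and `{Σ : G₁ ⊂ Σ ⊂ G_{i+3}}`; moreover it is given by
`U₁ = F_{2n+1−i} ∩ G_{i+3} ∩ F₁^⊥ ∩ G₁^⊥` and `U₃ = U₁ ⊕ F₁ ⊕ G₁`. -/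
theorem stmt_19 (n i : ℕ) (hn : 2 ≤ n) (hi : i ≤ 2 * n - 2)
    (V : Type*) [AddCommGroup V] [Module ℂ V] [FiniteDimensional ℂ V]
    (hV : finrank ℂ V = 2 * n + 1)
    (ω : V →ₗ[ℂ] V →ₗ[ℂ] ℂ) (halt : ∀ v : V, ω v v = 0)
    (hrank : finrank ℂ (LinearMap.range ω) = 2 * n)
    (F G : ℕ → Submodule ℂ V)
    (hFmono : Monotone F) (hGmono : Monotone G)
    (hFdim : ∀ p ≤ 2 * n + 1, finrank ℂ (F p) = p)
    (hGdim : ∀ q ≤ 2 * n + 1, finrank ℂ (G q) = q)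
    (hFtop : F (2 * n + 1) = ⊤) (hGtop : G (2 * n + 1) = ⊤)
    (h1 : ∀ p ≤ 2 * n + 1, ∀ q ≤ 2 * n + 1,
      finrank ℂ ↥(F p ⊓ G q) = p + q - (2 * n + 1))
    (h2 : finrank ℂ ↥(F (2 * n + 1 - i) ⊓ G (i + 3)
      ⊓ LinearMap.BilinForm.orthogonal ω (F 1)
      ⊓ LinearMap.BilinForm.orthogonal ω (G 1)) = 1)
    (h3 : ¬ F 1 ≤ LinearMap.BilinForm.orthogonal ω (G 1))
    (h4 : ¬ G 1 ≤ LinearMap.BilinForm.orthogonal ω (F 1)) :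
    (∃! U : Submodule ℂ V × Submodule ℂ V, linePred n i ω F G U) ∧
    linePred n i ω F G
      (F (2 * n + 1 - i) ⊓ G (i + 3)
        ⊓ LinearMap.BilinForm.orthogonal ω (F 1)
        ⊓ LinearMap.BilinForm.orthogonal ω (G 1),
       (F (2 * n + 1 - i) ⊓ G (i + 3)
        ⊓ LinearMap.BilinForm.orthogonal ω (F 1)
        ⊓ LinearMap.BilinForm.orthogonal ω (G 1)) ⊔ F 1 ⊔ G 1) := by
  have hF1 := hFdim 1 (by omega)
  have hG1 := hGdim 1 (by omega)
  have hFF := hFmono (show 1 ≤ 2 * n + 1 - i by omega)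
  have hGG := hGmono (show 1 ≤ i + 3 by omega)
  generalize hW : F (2 * n + 1 - i) ⊓ G (i + 3) ⊓ LinearMap.BilinForm.orthogonal ω (F 1)
      ⊓ LinearMap.BilinForm.orthogonal ω (G 1) = W at h2 ⊢
  have hWF : W ≤ F (2 * n + 1 - i) := by
    rw [← hW]; exact inf_le_left.trans (inf_le_left.trans inf_le_left)
  have hWG : W ≤ G (i + 3) := by
    rw [← hW]; exact inf_le_left.trans (inf_le_left.trans inf_le_right)
  have hWF1 : W ≤ LinearMap.BilinForm.orthogonal ω (F 1) := by
    rw [← hW]; exact inf_le_left.trans inf_le_right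
  have hWG1 : W ≤ LinearMap.BilinForm.orthogonal ω (G 1) := by
    rw [← hW]; exact inf_le_right
  have i1 : W ⊓ F 1 = ⊥ :=
    le_bot_iff.mp ((inf_le_inf_right _ hWG1).trans (aux_inf _ _ hF1 h3).le)
  have i2 : W ⊓ G 1 = ⊥ :=
    le_bot_iff.mp ((inf_le_inf_right _ hWF1).trans (aux_inf _ _ hG1 h4).le)
  have i3 : (W ⊔ F 1) ⊓ G 1 = ⊥ :=
    le_bot_iff.mp ((inf_le_inf_right _ (sup_le hWF1 (aux_self ω halt _ hF1))).trans
      (aux_inf _ _ hG1 h4).le)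
  have d1 := aux_sup _ _ i1
  have d2 := aux_sup _ _ i2
  have d3 := aux_sup _ _ i3
  have key : linePred n i ω F G (W, W ⊔ F 1 ⊔ G 1) := by
    refine ⟨h2, by simp only; omega, le_sup_left.trans le_sup_left,
      sup_le (sup_le (aux_self ω halt _ h2) (aux_symm ω halt _ _ hWF1))
        (aux_symm ω halt _ _ hWG1),
      ⟨W ⊔ F 1, by omega, le_sup_left, le_sup_left, le_sup_right, sup_le hWF hFF⟩,
      ⟨W ⊔ G 1, by omega, le_sup_left, sup_le (le_sup_left.trans le_sup_left) le_sup_right,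
        le_sup_right, sup_le hWG hGG⟩⟩
  refine ⟨⟨_, key, ?_⟩, key⟩
  rintro ⟨U₁, U₃⟩ ⟨e1, e3, -, ho, ⟨S, -, s1, s2, s3, s4⟩, ⟨T, -, t1, t2, t3, t4⟩⟩
  simp only at e1 e3 ho s1 s2 t1 t2
  have hU : U₁ ≤ W := by
    rw [← hW]
    exact le_inf (le_inf (le_inf (s1.trans s4) (t1.trans t4))
      (aux_symm ω halt _ _ ((s3.trans s2).trans ho)))
      (aux_symm ω halt _ _ ((t3.trans t2).trans ho))
  have hUW : U₁ = W := Submodule.eq_of_le_of_finrank_le hU (by omega)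
  subst hUW
  have h5 : U₁ ⊔ F 1 ⊔ G 1 = U₃ := Submodule.eq_of_le_of_finrank_le
    (sup_le (sup_le (s1.trans s2) (s3.trans s2)) (t3.trans t2)) (by omega)
  rw [h5]
end
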